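/- Let R be a commutative noetherian ring with identity, let a be a proper ideal of R with dim R/a = 2, and let M be a finitely generated R-module. If the local cohomology module H^{2i+1}_a(M) is a-cofinite for every i ≥ 0, then H^i_a(M) is a-cofinite for every i ≥ 0. -/

import Mathlib

universe u

open CategoryTheory

/-- `Ext^i_R(R/a, M)` as an `R`-module, for `M : ModuleCat R`. -/
noncomputable def extQuot {R : Type u} [CommRing R] (a : Ideal R) (i : ℕ)
    (M : ModuleCat.{u} R) : ModuleCat.{u} R :=
  ((Ext R (ModuleCat.{u} R) i).obj (Opposite.op (ModuleCat.of R (R ⧸ a)))).obj M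

/-- An `R`-module `M` is `a`-cofinite if `Supp M ⊆ V(a)` and `Ext^i_R(R/a, M)` is a
finitely generated `R`-module for every `i ≥ 0`. -/
def IsCofinite {R : Type u} [CommRing R] (a : Ideal R) (M : ModuleCat.{u} R) : Prop :=
  Module.support R M ⊆ PrimeSpectrum.zeroLocus (a : Set R) ∧
    ∀ i : ℕ, Module.Finite R (extQuot a i M)

/-!
Let `I` be an injective resolution of `M`. The complex `RΓ_a(M) = Γ_a(I)` has cohomology modules
`H^n_a(M)`, and `Ext^n(R/a, RΓ_a(M)) = Ext^n_R(R/a, M)` is finitely generated because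
`Hom_R(R/a, I/Γ_a(I)) = 0`.

If `dim R/a ≤ d`, an `a`-torsion module `X` is `a`-cofinite as soon as `Ext^k_R(R/a, X)` is finitely
generated for `k ≤ d`. To see this one replaces `X` by a complex and divides out a generic `x ∈ a`:
this enlarges the annihilator of the cohomology, so noetherian induction applies, and genericity
keeps the cohomology in degree `i` finitely generated outside the primes `p` with
`dim R/p ≤ d - i`.

Now let `d = 2` and let `H^m` be the lowest cohomology module of a complex `K` with all
`Ext^n(R/a, K)` finitely generated. In the long exact sequence of the truncation triangle
`H^m[-m] → K → K'`, the modules `Ext^k_R(R/a, H^m)` with `k ≤ 2` are controlled by `Ext^n(R/a, K')`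
with `n ≤ m + 1`, which is `Hom_R(R/a, H^{m+1})` for `n = m + 1` and zero below. Hence `H^m` is
cofinite if `H^{m+1}` is. Starting from `RΓ_a(M)`, cofiniteness of `H^1` gives that of `H^0`; both
can then be split off, and the argument repeats two degrees higher.
-/

universe w

open Limits Pretriangulated DerivedCategory

/-! ### Modules finitely generated outside a set of primes -/

section FiniteOutside

variable {R : Type*} [CommRing R] {X Y Z : Type*} [AddCommGroup X] [Module R X]
  [AddCommGroup Y] [Module R Y] [AddCommGroup Z] [Module R Z] {D D' : Set (PrimeSpectrum R)}

/-- `X` is finitely generated outside the set of primes `D`: it becomes zero at every prime outside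
`D` after dividing by a suitable finitely generated submodule. For `D = ∅` this is finite
generation. -/
def FiniteOutside (D : Set (PrimeSpectrum R)) (X : Type*) [AddCommGroup X] [Module R X] : Prop :=
  ∃ N : Submodule R X, N.FG ∧ Module.support R (X ⧸ N) ⊆ D

theorem support_quotient_subset_iff {N : Submodule R X} :
    Module.support R (X ⧸ N) ⊆ D ↔ ∀ p ∉ D, ∀ x : X, ∃ s ∉ p.asIdeal, s • x ∈ N := by
  refine forall_congr' fun p => ?_
  rw [← not_imp_not, Module.notMem_support_iff', N.mkQ_surjective.forall]
  simp only [Submodule.mkQ_apply, ← Submodule.Quotient.mk_smul, Submodule.Quotient.mk_eq_zero]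

namespace FiniteOutside

theorem mono (h : D ⊆ D') : FiniteOutside D X → FiniteOutside D' X :=
  fun ⟨N, hN, hs⟩ => ⟨N, hN, hs.trans h⟩

theorem of_finite [Module.Finite R X] : FiniteOutside D X :=
  ⟨⊤, Module.Finite.fg_top, by simp [Module.support_eq_empty]⟩

theorem finite (h : FiniteOutside (∅ : Set (PrimeSpectrum R)) X) : Module.Finite R X := by
  obtain ⟨N, hN, hs⟩ := h
  rw [Set.subset_empty_iff, Module.support_eq_empty_iff, Submodule.Quotient.subsingleton_iff]
    at hs
  exact ⟨hs ▸ hN⟩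

theorem of_surjective (f : X →ₗ[R] Y) (hf : Function.Surjective f) (h : FiniteOutside D X) :
    FiniteOutside D Y := by
  obtain ⟨N, hN, hs⟩ := h
  have hmap : Function.Surjective (N.mapQ (N.map f) f (N.le_comap_map f)) :=
    .of_comp (g := N.mkQ) ((N.map f).mkQ_surjective.comp hf)
  exact ⟨N.map f, hN.map f, (Module.support_subset_of_surjective _ hmap).trans hs⟩

theorem pi {ι : Type*} [Finite ι] (h : FiniteOutside D X) : FiniteOutside D (ι → X) := by
  cases nonempty_fintype ι
  obtain ⟨N, hN, hs⟩ := h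
  refine ⟨Submodule.pi Set.univ fun _ => N, Submodule.fg_pi fun _ => hN, ?_⟩
  rw [support_quotient_subset_iff] at hs ⊢
  intro p hp v
  choose s hsp hsv using fun i => hs p hp (v i)
  classical
  refine ⟨∏ i, s i, fun h => ?_, fun i _ => ?_⟩
  · obtain ⟨i, -, hi⟩ := (Ideal.IsPrime.prod_mem_iff).1 h
    exact hsp i hi
  · rw [Pi.smul_apply, ← Finset.prod_erase_mul _ _ (Finset.mem_univ i), mul_smul]
    exact N.smul_mem _ (hsv i)

variable [IsNoetherianRing R]

theorem of_injective (f : X →ₗ[R] Y) (hf : Function.Injective f) (h : FiniteOutside D Y) :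
    FiniteOutside D X := by
  obtain ⟨N, hN, hs⟩ := h
  have : Module.Finite R N := ⟨N.fg_top.2 hN⟩
  refine ⟨N.comap f, Submodule.fg_of_fg_map_injective f hf ?_, (Module.support_subset_of_injective
    ((N.comap f).mapQ N f le_rfl) ?_).trans hs⟩
  · exact Submodule.FG.of_le hN (Submodule.map_comap_le f N)
  · rw [← LinearMap.ker_eq_bot, Submodule.ker_mapQ, Submodule.mkQ_map_self]

theorem of_exact {f : X →ₗ[R] Y} {g : Y →ₗ[R] Z} (hfg : Function.Exact f g)
    (hX : FiniteOutside D X) (hZ : FiniteOutside D Z) : FiniteOutside D Y := by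
  obtain ⟨N, hN, hsN⟩ := hX
  obtain ⟨P, hP, hsP⟩ := of_injective g.range.subtype g.range.injective_subtype hZ
  obtain ⟨Q, hQ, rfl⟩ : ∃ Q : Submodule R Y, Q.FG ∧ Q.map g.rangeRestrict = P := by
    obtain ⟨S, hS, rfl⟩ := Submodule.fg_def.1 hP
    refine ⟨_, Submodule.fg_span (hS.image (Function.surjInv g.surjective_rangeRestrict)), ?_⟩
    rw [Submodule.map_span, Set.image_image]
    simp only [Function.surjInv_eq, Set.image_id']
  refine ⟨N.map f ⊔ Q, (hN.map f).sup hQ, ?_⟩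
  rw [support_quotient_subset_iff] at hsN hsP ⊢
  intro p hp y
  obtain ⟨s, hs, q, hq, hqy⟩ := hsP p hp (g.rangeRestrict y)
  obtain ⟨x, hx⟩ := (hfg (s • y - q)).1 <| by
    rw [map_sub, map_smul, sub_eq_zero]; exact congrArg Subtype.val hqy.symm
  obtain ⟨t, ht, htx⟩ := hsN p hp x
  refine ⟨t * s, p.2.mul_notMem ht hs, ?_⟩
  have : (t * s) • y = f (t • x) + t • q := by rw [map_smul, hx, smul_sub, mul_smul, sub_add_cancel]
  exact this ▸ Submodule.add_mem_sup (Submodule.mem_map_of_mem htx) (Q.smul_mem t hq)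

end FiniteOutside
end FiniteOutside

section Torsion

variable {R : Type*} [CommRing R] {X : Type*} [AddCommGroup X] [Module R X]

theorem support_subset_zeroLocus_of_pow {a : Ideal R}
    (h : ∀ x : X, ∃ n, ∀ r ∈ a ^ n, r • x = 0) :
    Module.support R X ⊆ PrimeSpectrum.zeroLocus a := by
  intro p hp r hr
  by_contra hrp
  refine Module.notMem_support_iff'.2 (fun x => ?_) hp
  obtain ⟨n, hn⟩ := h x
  exact ⟨r ^ n, fun h => hrp (p.2.mem_of_pow_mem n h), hn _ (Ideal.pow_mem_pow hr n)⟩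

variable [IsNoetherianRing R]

theorem exists_pow_smul_eq_zero {a : Ideal R}
    (h : Module.support R X ⊆ PrimeSpectrum.zeroLocus a) (x : X) :
    ∃ n, ∀ r ∈ a ^ n, r • x = 0 := by
  have hsupp : PrimeSpectrum.zeroLocus (Module.annihilator R (R ∙ x) : Set R) ⊆
      PrimeSpectrum.zeroLocus a := by
    rw [← Module.support_eq_zeroLocus]
    exact (Module.support_subset_of_injective _ (R ∙ x).injective_subtype).trans h
  rw [PrimeSpectrum.zeroLocus_subset_zeroLocus_iff] at hsupp
  obtain ⟨n, hn⟩ := Ideal.exists_pow_le_of_le_radical_of_fg hsupp (IsNoetherian.noetherian a)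
  exact ⟨n, fun r hr => congrArg Subtype.val
    (Module.mem_annihilator.1 (hn hr) ⟨x, Submodule.mem_span_singleton_self x⟩)⟩

namespace FiniteOutside

variable {D : Set (PrimeSpectrum R)} {a : Ideal R}

theorem of_forall_smul_mem {N P : Submodule R X} (hP : FiniteOutside D P)
    (ha : FiniteOutside D (Submodule.torsionBySet R X (a : Set R)))
    (h : ∀ x ∈ N, ∀ r ∈ a, r • x ∈ P) : FiniteOutside D N := by
  obtain ⟨s, hs⟩ := IsNoetherian.noetherian a
  let φ : N →ₗ[R] (s → P) := LinearMap.pi fun r => (LinearMap.lsmul R X r.1).restrict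
    fun x hx => h x hx _ (hs ▸ Submodule.subset_span r.2)
  have hker (x : φ.ker) : x.1.1 ∈ Submodule.torsionBySet R X (a : Set R) := by
    rw [← hs, ← Ideal.span, ← Submodule.torsionBySet_eq_torsionBySet_span,
      Submodule.mem_torsionBySet_iff]
    exact fun r => congrArg Subtype.val (congrFun x.2 r)
  have hinj : Function.Injective
      ((N.subtype ∘ₗ φ.ker.subtype).codRestrict _ hker) :=
    (LinearMap.injective_codRestrict_iff hker).2
      (N.injective_subtype.comp φ.ker.injective_subtype)
  exact of_exact (LinearMap.exact_subtype_ker_map φ) (of_injective _ hinj ha) hP.pi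

theorem of_pow_smul_eq_zero (k : ℕ)
    (ha : FiniteOutside D (Submodule.torsionBySet R X (a : Set R)))
    (h : ∀ x : X, ∀ r ∈ a ^ k, r • x = 0) : FiniteOutside D X := by
  have key (k : ℕ) :
      FiniteOutside D (Submodule.torsionBySet R X (a ^ k : Ideal R)) := by
    induction k with
    | zero =>
      have : Submodule.torsionBySet R X (a ^ 0 : Ideal R) = ⊥ := by
        rw [pow_zero, Ideal.one_eq_top]
        exact Submodule.torsionBySet_univ
      rw [this]
      exact of_finite
    | succ k ih =>
      refine ih.of_forall_smul_mem ha fun x hx r hr => ?_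
      rw [Submodule.mem_torsionBySet_iff] at hx ⊢
      intro t
      rw [smul_smul]
      exact hx ⟨_, pow_succ a k ▸ Ideal.mul_mem_mul t.2 hr⟩
  exact of_surjective (Submodule.subtype _)
    (fun x => ⟨⟨x, (Submodule.mem_torsionBySet_iff _ _).2 fun r => h x r r.2⟩, rfl⟩) (key k)

end FiniteOutside
end Torsion

/-! ### Artinian modules and generic elements -/

section Artinian

theorem exists_forall_ge_eq_of_antitone₂ {α : Type*} [PartialOrder α] [WellFoundedLT α]
    (f : ℕ → ℕ → α) (hf : ∀ k, Antitone (f k)) (hf' : ∀ n, Antitone fun k => f k n) :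
    ∃ N, ∀ n ≥ N, ∀ k, f k n = f k N := by
  have stab (g : ℕ → α) (hg : Antitone g) : ∃ N, ∀ n ≥ N, g n = g N := by
    obtain ⟨N, hN⟩ := WellFoundedLT.antitone_chain_condition hg
    exact ⟨N, fun n hn => (hN n hn).symm⟩
  obtain ⟨m, hm⟩ := stab (fun n => f n n) fun i j hij => (hf j hij).trans (hf' i hij)
  have hdiag {k n : ℕ} (hk : m ≤ k) (hn : m ≤ n) : f k n = f m m := by
    refine le_antisymm ((hf k hn).trans (hf' m hk)) ?_
    rw [← hm (max k n) (hk.trans (le_max_left k n))]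
    exact (hf _ (le_max_right k n)).trans (hf' n (le_max_left k n))
  choose N hN using fun k => stab (f k) (hf k)
  refine ⟨max m ((Finset.range m).sup N), fun n hn k => ?_⟩
  obtain hk | hk := lt_or_ge k m
  · have hNk : N k ≤ max m ((Finset.range m).sup N) :=
      (Finset.le_sup (Finset.mem_range.2 hk)).trans (le_max_right _ _)
    rw [hN k n (hNk.trans hn), hN k _ hNk]
  · rw [hdiag hk ((le_max_left _ _).trans hn), hdiag hk (le_max_left _ _)]

variable {R : Type*} [CommRing R] {X : Type*} [AddCommGroup X] [Module R X]

/-- The submodule `x ^ k S ∩ 0 :_X x` of `0 :_X x`. -/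
def powLayer (x : R) (k : ℕ) (S : Submodule R X) : Submodule R (Submodule.torsionBy R X x) :=
  (S.map (LinearMap.lsmul R X (x ^ k))).submoduleOf _

theorem eq_of_powLayer_eq {x : R} (hx : ∀ u : X, ∃ n : ℕ, x ^ n • u = 0) {S T : Submodule R X}
    (hST : S ≤ T) (h : ∀ k, powLayer x k S = powLayer x k T) : S = T := by
  have key (k : ℕ) : ∀ u ∈ T, x ^ k • u = 0 → u ∈ S := by
    induction k with
    | zero => intro u _ hu; rw [pow_zero, one_smul] at hu; exact hu ▸ S.zero_mem
    | succ k ih =>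
      intro u hu hk
      have huT : ⟨x ^ k • u, by rwa [Submodule.mem_torsionBy_iff, smul_smul, ← pow_succ']⟩ ∈
          powLayer x k T := ⟨u, hu, rfl⟩
      rw [← h k] at huT
      obtain ⟨v, hv, hvu⟩ := huT
      have hvu : x ^ k • v = x ^ k • u := hvu
      have : u - v ∈ S := ih (u - v) (T.sub_mem hu (hST hv)) (by rw [smul_sub, hvu, sub_self])
      exact (S.sub_mem_iff_left hv).1 this
  refine le_antisymm hST fun u hu => ?_
  obtain ⟨n, hn⟩ := hx u
  exact key n u hu hn

-- A chain of submodules is controlled by its layers, which form a doubly decreasing family in the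
-- Artinian module `0 :_X x`.
theorem isArtinian_of_torsionBy {x : R} (hx : ∀ u : X, ∃ n : ℕ, x ^ n • u = 0)
    [IsArtinian R (Submodule.torsionBy R X x)] : IsArtinian R X := by
  rw [← monotone_stabilizes_iff_artinian]
  intro f
  obtain ⟨N, hN⟩ := exists_forall_ge_eq_of_antitone₂
    (fun k n => powLayer x k (OrderDual.ofDual (f n)))
    (fun k i j hij => Submodule.comap_mono (Submodule.map_mono (f.monotone hij)))
    (fun n => antitone_nat_of_succ_le fun k => by
      rintro u ⟨v, hv, hvu⟩
      refine ⟨x • v, (OrderDual.ofDual (f n)).smul_mem x hv, ?_⟩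
      rw [← hvu]
      simp only [LinearMap.lsmul_apply, smul_smul, pow_succ])
  exact ⟨N, fun n hn => (eq_of_powLayer_eq hx (f.monotone hn) (hN n hn)).symm⟩

theorem isArtinian_of_torsionBySet_finset (s : Finset R)
    (hs : ∀ x ∈ s, ∀ u : X, ∃ n : ℕ, x ^ n • u = 0)
    [IsArtinian R (Submodule.torsionBySet R X (s : Set R))] : IsArtinian R X := by
  classical
  induction s using Finset.induction_on generalizing X with
  | empty =>
    exact isArtinian_of_surjective _ (Submodule.subtype _) fun u =>
      ⟨⟨u, (Submodule.mem_torsionBySet_iff _ _).2 fun r => absurd r.2 (Finset.notMem_empty _)⟩, rfl⟩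
  | insert x s _ ih =>
    have hinj : Function.Injective ((Submodule.torsionBy R X x).subtype.restrict
        (p := Submodule.torsionBySet R _ (s : Set R))
        (q := Submodule.torsionBySet R X (insert x s : Finset R)) fun u hu => by
          rw [Submodule.mem_torsionBySet_iff] at hu ⊢
          rintro ⟨r, hr⟩
          obtain rfl | hr := Finset.mem_insert.1 hr
          · exact (Submodule.mem_torsionBy_iff _ _).1 u.2
          · exact congrArg Subtype.val (hu ⟨r, hr⟩)) :=
      .of_comp (f := Submodule.subtype _)
        ((Submodule.injective_subtype (Submodule.torsionBy R X x)).comp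
          (Submodule.injective_subtype (Submodule.torsionBySet R _ (s : Set R))))
    have := isArtinian_of_injective _ hinj
    have := ih (X := Submodule.torsionBy R X x) fun y hy u => by
      obtain ⟨n, hn⟩ := hs y (Finset.mem_insert_of_mem hy) u
      exact ⟨n, Subtype.ext hn⟩
    exact isArtinian_of_torsionBy (hs x (Finset.mem_insert_self x s))

theorem isArtinian_of_torsionBySet [IsNoetherianRing R] {a : Ideal R}
    (h : Module.support R X ⊆ PrimeSpectrum.zeroLocus a)
    [IsArtinian R (Submodule.torsionBySet R X (a : Set R))] : IsArtinian R X := by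
  obtain ⟨s, rfl⟩ := IsNoetherian.noetherian a
  rw [← Ideal.span, ← Submodule.torsionBySet_eq_torsionBySet_span] at *
  refine isArtinian_of_torsionBySet_finset s fun x hx u => ?_
  obtain ⟨n, hn⟩ := exists_pow_smul_eq_zero h u
  exact ⟨n, hn _ (Ideal.pow_mem_pow (Submodule.subset_span hx) n)⟩

end Artinian

section GenericElements

open Filter

variable {R : Type*} [CommRing R]

/-- The filter of generic elements of the ideal `a`: a property holds for generic `x ∈ a` if it
holds for all `x ∈ a` lying outside finitely many primes, none of which contains `a`. -/
def generic (a : Ideal R) : Filter R :=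
  𝓟 (a : Set R) ⊓
    ⨅ p : {p : PrimeSpectrum R // ¬ a ≤ p.asIdeal}, 𝓟 {x | x ∉ p.1.asIdeal}

theorem eventually_generic_mem (a : Ideal R) : ∀ᶠ x in generic a, x ∈ a :=
  mem_inf_of_left (mem_principal_self _)

theorem eventually_generic_notMem {a p : Ideal R} [hp : p.IsPrime] (h : ¬ a ≤ p) :
    ∀ᶠ x in generic a, x ∉ p :=
  mem_inf_of_right (mem_iInf_of_mem ⟨⟨p, hp⟩, h⟩ (mem_principal_self _))

theorem exists_notMem_of_eventually_generic {a b : Ideal R} (hab : ¬ a ≤ b) {Q : R → Prop}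
    (h : ∀ᶠ x in generic a, Q x) : ∃ x ∈ a, x ∉ b ∧ Q x := by
  obtain ⟨P, hP, hPQ⟩ := ((hasBasis_iInf_principal_finite _).principal_inf _).eventually_iff.1 h
  by_contra! hcon
  classical
  have hsub : (a : Set R) ⊆
      ⋃ i ∈ (↑(hP.toFinset.image some ∪ {none}) :
          Set (Option {p : PrimeSpectrum R // ¬ a ≤ p.asIdeal})),
        (i.elim b fun p => p.1.asIdeal : Ideal R) := by
    intro x hxa
    simp only [Set.mem_iUnion]
    by_contra! hx
    refine hcon x hxa (hx none (by simp)) (hPQ ⟨hxa, ?_⟩)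
    exact Set.mem_iInter₂.2 fun p hp => hx (some p) (by simpa using hp)
  obtain ⟨i, -, hi⟩ := (Ideal.subset_union_prime none none (by
    rintro (_ | p) - h - <;> [exact absurd rfl h; exact p.1.2])).1 hsub
  cases i with
  | none => exact hab hi
  | some p => exact p.2 hi

theorem tendsto_algebraMap_generic (A : Type*) [CommRing A] [Algebra R A] (a : Ideal R) :
    Tendsto (algebraMap R A) (generic a) (generic (a.map (algebraMap R A))) := by
  refine tendsto_inf.2 ⟨?_, tendsto_iInf.2 fun p => ?_⟩ <;> rw [tendsto_principal]
  · exact (eventually_generic_mem a).mono fun x => Ideal.mem_map_of_mem _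
  · exact eventually_generic_notMem (p := p.1.asIdeal.comap (algebraMap R A))
      fun h => p.2 (Ideal.map_le_iff_le_comap.2 h)

end GenericElements

section TorsionBySetMap

variable {R : Type*} [CommRing R] {X Y : Type*} [AddCommGroup X] [Module R X]
  [AddCommGroup Y] [Module R Y] (s : Set R)

/-- The map `0 :_X s → 0 :_Y s` induced by a linear map `X → Y`. -/
def torsionBySetMap (f : X →ₗ[R] Y) :
    Submodule.torsionBySet R X s →ₗ[R] Submodule.torsionBySet R Y s :=
  f.restrict fun x hx => (Submodule.mem_torsionBySet_iff _ _).2 fun r => by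
    rw [← map_smul, (Submodule.mem_torsionBySet_iff _ _).1 hx, map_zero]

theorem torsionBySetMap_injective {f : X →ₗ[R] Y} (hf : Function.Injective f) :
    Function.Injective (torsionBySetMap s f) :=
  fun _ _ h => Subtype.ext (hf (congrArg Subtype.val h))

end TorsionBySetMap

section SecondaryRepresentation

open scoped Pointwise

variable {A : Type*} [CommRing A] {V : Type*} [AddCommGroup V] [Module A V]

theorem supIrred_top_of_supIrred {S : Submodule A V} (hS : SupIrred S) :
    SupIrred (⊤ : Submodule A S) := by
  have hmap : Function.Injective (Submodule.map S.subtype) :=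
    Submodule.map_injective_of_injective S.injective_subtype
  refine ⟨fun h => hS.1 (isMin_iff_eq_bot.2 (S.map_subtype_top.symm.trans ?_)), fun b c h => ?_⟩
  · rw [isMin_iff_eq_bot.1 h, Submodule.map_bot]
  · have := hS.2 (by rw [← Submodule.map_sup, h, S.map_subtype_top] :
      b.map S.subtype ⊔ c.map S.subtype = S)
    exact this.imp (fun h => hmap (h.trans S.map_subtype_top.symm))
      fun h => hmap (h.trans S.map_subtype_top.symm)

variable [IsArtinian A V]

theorem surjective_or_isNilpotent_of_supIrred_top (hV : SupIrred (⊤ : Submodule A V))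
    (f : Module.End A V) : Function.Surjective f ∨ IsNilpotent f := by
  obtain ⟨n, hn, hn1⟩ :=
    (f.eventually_codisjoint_ker_pow_range_pow.and (Filter.eventually_ge_atTop 1)).exists
  refine (hV.2 hn.eq_top).symm.imp (fun h => ?_) fun h => ⟨n, LinearMap.ker_eq_top.1 h⟩
  rw [LinearMap.range_eq_top, ← Nat.sub_add_cancel hn1, pow_succ'] at h
  exact .of_comp (g := ⇑(f ^ (n - 1))) h

theorem smul_surjective_of_notMem_radical_annihilator (hV : SupIrred (⊤ : Submodule A V)) {r : A}
    (hr : r ∉ (Module.annihilator A V).radical) : Function.Surjective fun v : V => r • v :=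
  (surjective_or_isNilpotent_of_supIrred_top hV (algebraMap A (Module.End A V) r)).resolve_right
    fun ⟨n, hn⟩ => hr ⟨n, Module.mem_annihilator.2 fun v => by
      rw [← Module.algebraMap_end_apply A A, map_pow, hn, LinearMap.zero_apply]⟩

theorem isPrime_radical_annihilator (hV : SupIrred (⊤ : Submodule A V)) :
    (Module.annihilator A V).radical.IsPrime := by
  have : Nontrivial V := (Submodule.nontrivial_iff A).1
    ⟨⊤, ⊥, fun h => hV.1 (isMin_iff_eq_bot.2 h)⟩
  refine ⟨fun h => ?_, fun {r s} ⟨n, hn⟩ => or_iff_not_imp_left.2 fun hr => ⟨n, ?_⟩⟩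
  · rw [Ideal.radical_eq_top, Module.annihilator_eq_top_iff] at h
    exact not_subsingleton V h
  · refine Module.mem_annihilator.2 fun v => ?_
    obtain ⟨w, rfl⟩ := (smul_surjective_of_notMem_radical_annihilator hV hr).iterate n v
    rw [smul_iterate_apply, ← mul_smul, ← mul_pow, mul_comm]
    exact Module.mem_annihilator.1 hn w

variable [IsNoetherianRing A] (b : Ideal A)
  [Module.Finite A (Submodule.torsionBySet A V (b : Set A))]

theorem eventually_finite_quotSMulTop_of_supIrred (hV : SupIrred (⊤ : Submodule A V)) :
    ∀ᶠ x in generic b, Module.Finite A (QuotSMulTop x V) := by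
  have := isPrime_radical_annihilator hV
  by_cases hb : b ≤ (Module.annihilator A V).radical
  · obtain ⟨k, hk⟩ := Ideal.exists_pow_le_of_le_radical_of_fg hb (IsNoetherian.noetherian b)
    have : Module.Finite A V := (FiniteOutside.of_pow_smul_eq_zero k .of_finite
      fun v r hr => Module.mem_annihilator.1 (hk hr) v).finite
    exact .of_forall fun x => inferInstance
  · filter_upwards [eventually_generic_notMem hb] with x hx
    have : Subsingleton (QuotSMulTop x V) := by
      refine Submodule.Quotient.subsingleton_iff.2 (eq_top_iff.2 fun v _ => ?_)
      obtain ⟨w, rfl⟩ := smul_surjective_of_notMem_radical_annihilator hV hx v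
      exact Submodule.smul_mem_pointwise_smul w x ⊤ trivial
    infer_instance

-- `V` is a finite sum of sum-irreducible submodules. A generic element of `b` acts surjectively on
-- each of them, except on those killed by a power of `b`, which are finite.
theorem eventually_finite_quotSMulTop :
    ∀ᶠ x in generic b, Module.Finite A (QuotSMulTop x V) := by
  obtain ⟨s, hs, hirr⟩ := exists_supIrred_decomposition (⊤ : Submodule A V)
  have hev : ∀ᶠ x in generic b, ∀ S ∈ s, Module.Finite A (QuotSMulTop x S) := by
    refine (Filter.eventually_all_finset s).2 fun S hS => ?_
    have : Module.Finite A (Submodule.torsionBySet A S (b : Set A)) :=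
      .of_injective (torsionBySetMap (b : Set A) S.subtype)
        (torsionBySetMap_injective _ S.injective_subtype)
    exact eventually_finite_quotSMulTop_of_supIrred b (supIrred_top_of_supIrred (hirr hS))
  filter_upwards [hev] with x hx
  have hmap (S : Submodule A V) : S.map (Submodule.mkQ (x • ⊤ : Submodule A V)) =
      (QuotSMulTop.map x S.subtype).range := by
    rw [← LinearMap.range_comp_of_range_eq_top _ (Submodule.range_mkQ _),
      QuotSMulTop.map_comp_mkQ, LinearMap.range_comp, S.range_subtype]
  have hsup : (⨆ S ∈ s, (QuotSMulTop.map x S.subtype).range) = ⊤ := by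
    simp only [← hmap, ← Submodule.map_iSup, ← Finset.sup_eq_iSup]
    exact (congrArg _ hs).trans ((Submodule.map_top _).trans (Submodule.range_mkQ _))
  exact ⟨hsup ▸ Submodule.fg_biSup _ _ fun S hS => have := hx S hS; .of_finite⟩

end SecondaryRepresentation

section LocalizationAtPrime

variable {R : Type*} [CommRing R] {X : Type*} [AddCommGroup X] [Module R X] (q : PrimeSpectrum R)

theorem finiteOutside_compl_singleton_iff :
    FiniteOutside {q}ᶜ X ↔ Module.Finite (Localization.AtPrime q.asIdeal)
      (LocalizedModule q.asIdeal.primeCompl X) := by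
  constructor
  · rintro ⟨N, hN, hs⟩
    have := Module.Finite.iff_fg.2 hN
    have : Subsingleton (LocalizedModule q.asIdeal.primeCompl (X ⧸ N)) :=
      Module.notMem_support_iff.1 fun h => hs h rfl
    have hsurj : Function.Surjective (LocalizedModule.map q.asIdeal.primeCompl N.subtype) :=
      fun y => (LocalizedModule.map_exact q.asIdeal.primeCompl N.subtype N.mkQ
        (LinearMap.exact_subtype_mkQ N) y).1 (Subsingleton.elim _ _)
    exact .of_surjective _ hsurj
  · rintro ⟨s, hs⟩
    let ι := LocalizedModule.mkLinearMap q.asIdeal.primeCompl X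
    choose f hf using IsLocalizedModule.surj q.asIdeal.primeCompl ι
    let N := Submodule.span R ((fun y => (f y).1) '' s)
    have htop : N.localized' (Localization.AtPrime q.asIdeal) q.asIdeal.primeCompl ι = ⊤ := by
      rw [eq_top_iff, ← hs, Submodule.span_le]
      exact fun y hy => ⟨(f y).1, Submodule.subset_span ⟨y, hy, rfl⟩, (f y).2,
        IsLocalizedModule.mk'_eq_iff.2 (hf y).symm⟩
    refine ⟨N, Submodule.fg_span (s.finite_toSet.image _), support_quotient_subset_iff.2 ?_⟩
    rintro p hp x
    obtain rfl : p = q := not_not.1 hp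
    obtain ⟨m, hm, t, hmt⟩ := htop ▸ Submodule.mem_top (x := ι x)
    rw [IsLocalizedModule.mk'_eq_iff, Submonoid.smul_def, ← map_smul] at hmt
    obtain ⟨c, hc⟩ := IsLocalizedModule.exists_of_eq (S := p.asIdeal.primeCompl) hmt
    refine ⟨c * t, (c * t).2, ?_⟩
    rw [mul_smul]
    exact hc ▸ N.smul_mem c hm

theorem support_subset_support_torsionBySet [IsNoetherianRing R] {a : Ideal R}
    (h : Module.support R X ⊆ PrimeSpectrum.zeroLocus a) :
    Module.support R X ⊆ Module.support R (Submodule.torsionBySet R X (a : Set R)) := by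
  intro p hp
  obtain ⟨x, hx⟩ := Module.mem_support_iff_exists_annihilator.1 hp
  obtain ⟨q, hq, hqp⟩ := Ideal.exists_minimalPrimes_le hx
  obtain ⟨hprime, y, rfl⟩ := isAssociatedPrime_iff.1 <| IsAssociatedPrime.map_of_injective
    (R ∙ x).subtype (Module.associatedPrimes.minimalPrimes_annihilator_subset_associatedPrimes
      R (R ∙ x) hq) (R ∙ x).injective_subtype
  have hy {r : R} (hr : r • y = 0) : r ∈ (⊥ : Submodule R X).colon {y} :=
    Submodule.mem_colon_singleton.2 hr
  have hya : y ∈ Submodule.torsionBySet R X (a : Set R) := by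
    refine (Submodule.mem_torsionBySet_iff _ _).2 fun r =>
      (Submodule.mem_bot R).1 (Submodule.mem_colon_singleton.1 ?_)
    refine h (a := ⟨_, hprime⟩) (Module.mem_support_iff_exists_annihilator.2 ⟨y, fun r hr => ?_⟩)
      r.2
    exact hy ((Submodule.mem_annihilator_span_singleton _ _).1 hr)
  refine Module.mem_support_mono (p := ⟨_, hprime⟩) hqp
    (Module.mem_support_iff_exists_annihilator.2 ⟨⟨y, hya⟩, fun r hr => hy ?_⟩)
  exact congrArg Subtype.val ((Submodule.mem_annihilator_span_singleton _ _).1 hr)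

end LocalizationAtPrime

section MinimalSupport

open scoped Pointwise

variable {R : Type*} [CommRing R] {X : Type*} [AddCommGroup X] [Module R X]

theorem FiniteOutside.of_finite_union {T D : Set (PrimeSpectrum R)} (hT : T.Finite)
    (hX : Module.support R X ⊆ T ∪ D) (h : ∀ q ∈ T, FiniteOutside {q}ᶜ X) :
    FiniteOutside D X := by
  choose! N hN hs using h
  refine ⟨⨆ q ∈ hT.toFinset, N q, Submodule.fg_biSup _ _ fun q hq => hN q (hT.mem_toFinset.1 hq),
    fun p hp => ?_⟩
  refine (hX (Module.support_subset_of_surjective _ (Submodule.mkQ_surjective _) hp)).resolve_left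
    fun hpT => ?_
  have hle : N p ≤ ⨆ q ∈ hT.toFinset, N q := le_iSup₂_of_le p (hT.mem_toFinset.2 hpT) le_rfl
  exact hs p hpT (Module.support_subset_of_surjective _ (Submodule.factor_surjective hle) hp) rfl

theorem support_localizedModule_subset {q : PrimeSpectrum R}
    (hq : Minimal (· ∈ Module.support R X) q) :
    Module.support (Localization.AtPrime q.asIdeal) (LocalizedModule q.asIdeal.primeCompl X) ⊆
      PrimeSpectrum.zeroLocus (IsLocalRing.maximalIdeal (Localization.AtPrime q.asIdeal)) := by
  intro p hp
  obtain ⟨v, hv⟩ := Module.mem_support_iff_exists_annihilator.1 hp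
  have hle : p.comap (algebraMap R _) ≤ q :=
    ((IsLocalization.AtPrime.orderIsoOfPrime _ q.asIdeal) ⟨p.asIdeal, p.2⟩).2.2
  induction v using LocalizedModule.induction_on with | _ x s
  have hmem : p.comap (algebraMap R _) ∈ Module.support R X := by
    refine Module.mem_support_iff_exists_annihilator.2 ⟨x, fun r hr => hv ?_⟩
    rw [Submodule.mem_annihilator_span_singleton] at hr ⊢
    rw [algebraMap_smul, LocalizedModule.smul'_mk, hr, LocalizedModule.zero_mk]
  rw [PrimeSpectrum.mem_zeroLocus, SetLike.coe_subset_coe,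
    ← Localization.AtPrime.map_eq_maximalIdeal, Ideal.map_le_iff_le_comap]
  exact hq.2 hmem hle

theorem isArtinian_torsionBySet (m : Ideal R) [m.IsMaximal]
    [Module.Finite R (Submodule.torsionBySet R X (m : Set R))] :
    IsArtinian R (Submodule.torsionBySet R X (m : Set R)) := by
  let := Ideal.Quotient.field m
  have : Module.Finite (R ⧸ m) (Submodule.torsionBySet R X (m : Set R)) :=
    .of_restrictScalars_finite R _ _
  exact isArtinian_of_surjective_algebraMap (R := R ⧸ m) Ideal.Quotient.mk_surjective

variable [IsNoetherianRing R] {a : Ideal R} {q : PrimeSpectrum R}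

theorem finite_torsionBySet_localizedModule
    (h : FiniteOutside {q}ᶜ (Submodule.torsionBySet R X (a : Set R))) :
    Module.Finite (Localization.AtPrime q.asIdeal) (Submodule.torsionBySet
      (Localization.AtPrime q.asIdeal) (LocalizedModule q.asIdeal.primeCompl X)
      (a.map (algebraMap R (Localization.AtPrime q.asIdeal)) : Set _)) := by
  have := (finiteOutside_compl_singleton_iff q).1 h
  have hle : Submodule.torsionBySet (Localization.AtPrime q.asIdeal)
      (LocalizedModule q.asIdeal.primeCompl X)
      (a.map (algebraMap R (Localization.AtPrime q.asIdeal)) : Set _) ≤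
        (LocalizedModule.map q.asIdeal.primeCompl
          (Submodule.torsionBySet R X (a : Set R)).subtype).range := by
    intro v hv
    induction v using LocalizedModule.induction_on with | _ x s
    have hax : q ∉ Module.support R (a • (R ∙ x) : Submodule R X) := by
      refine Module.notMem_support_iff'.2 fun ⟨y, hy⟩ => ?_
      obtain ⟨r, hr, rfl⟩ := Submodule.mem_smul_span_singleton.1 hy
      have hrv : algebraMap R (Localization.AtPrime q.asIdeal) r • LocalizedModule.mk x s = 0 :=
        (Submodule.mem_torsionBySet_iff _ _).1 hv ⟨_, Ideal.mem_map_of_mem _ hr⟩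
      rw [algebraMap_smul, LocalizedModule.smul'_mk, ← LocalizedModule.zero_mk 1,
        LocalizedModule.mk_eq] at hrv
      obtain ⟨c, hc⟩ := hrv
      exact ⟨c, c.2, Subtype.ext (by simpa [Submonoid.smul_def] using hc)⟩
    have : Module.Finite R (a • (R ∙ x) : Submodule R X) :=
      Module.Finite.iff_fg.2 (.smul (IsNoetherian.noetherian a) (Submodule.fg_span_singleton x))
    rw [Module.mem_support_iff_of_finite, SetLike.not_le_iff_exists] at hax
    obtain ⟨c, hc, hcq⟩ := hax
    have hcx : c • x ∈ Submodule.torsionBySet R X (a : Set R) := by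
      refine (Submodule.mem_torsionBySet_iff _ _).2 fun r => ?_
      rw [smul_comm]
      exact congrArg Subtype.val (Module.mem_annihilator.1 hc
        ⟨r.1 • x, Submodule.smul_mem_smul r.2 (Submodule.mem_span_singleton_self x)⟩)
    refine ⟨.mk ⟨c • x, hcx⟩ (⟨c, hcq⟩ * s), ?_⟩
    rw [LocalizedModule.map_mk]
    exact LocalizedModule.mk_cancel_common_left ⟨c, hcq⟩ s x
  exact .of_injective (Submodule.inclusion hle) (Submodule.inclusion_injective hle)

theorem isArtinian_localizedModule (hq : Minimal (· ∈ Module.support R X) q)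
    (ha : Module.support R X ⊆ PrimeSpectrum.zeroLocus a)
    (h : FiniteOutside {q}ᶜ (Submodule.torsionBySet R X (a : Set R))) :
    IsArtinian (Localization.AtPrime q.asIdeal) (LocalizedModule q.asIdeal.primeCompl X) := by
  have := finite_torsionBySet_localizedModule h
  have hle : Submodule.torsionBySet (Localization.AtPrime q.asIdeal)
      (LocalizedModule q.asIdeal.primeCompl X)
      (IsLocalRing.maximalIdeal (Localization.AtPrime q.asIdeal) : Set _) ≤
        Submodule.torsionBySet (Localization.AtPrime q.asIdeal)
          (LocalizedModule q.asIdeal.primeCompl X)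
          (a.map (algebraMap R (Localization.AtPrime q.asIdeal)) : Set _) := by
    refine Submodule.torsionBySet_le_torsionBySet_of_subset ?_
    rw [SetLike.coe_subset_coe, ← Localization.AtPrime.map_eq_maximalIdeal]
    exact Ideal.map_mono (ha hq.1)
  have := Module.Finite.of_injective _ (Submodule.inclusion_injective hle)
  have : IsArtinian (Localization.AtPrime q.asIdeal) (Submodule.torsionBySet
      (Localization.AtPrime q.asIdeal) (LocalizedModule q.asIdeal.primeCompl X)
      (IsLocalRing.maximalIdeal (Localization.AtPrime q.asIdeal) : Set _)) :=
    isArtinian_torsionBySet _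
  exact isArtinian_of_torsionBySet (support_localizedModule_subset hq)

theorem eventually_finiteOutside_quotSMulTop (hq : Minimal (· ∈ Module.support R X) q)
    (ha : Module.support R X ⊆ PrimeSpectrum.zeroLocus a)
    (h : FiniteOutside {q}ᶜ (Submodule.torsionBySet R X (a : Set R))) :
    ∀ᶠ x in generic a, FiniteOutside {q}ᶜ (QuotSMulTop x X) := by
  have := finite_torsionBySet_localizedModule h
  have := isArtinian_localizedModule hq ha h
  filter_upwards [(tendsto_algebraMap_generic (Localization.AtPrime q.asIdeal) a).eventually
    (eventually_finite_quotSMulTop (V := LocalizedModule q.asIdeal.primeCompl X) _)] with x hx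
  rw [finiteOutside_compl_singleton_iff]
  let π := LocalizedModule.map q.asIdeal.primeCompl (Submodule.mkQ (x • ⊤ : Submodule R X))
  have hπ : (algebraMap R (Localization.AtPrime q.asIdeal) x • ⊤ : Submodule _ _) ≤ π.ker := by
    rintro _ ⟨v, -, rfl⟩
    induction v using LocalizedModule.induction_on with | _ y s
    have hxy : (Submodule.mkQ (x • ⊤ : Submodule R X)) (x • y) = 0 :=
      (Submodule.Quotient.mk_eq_zero _).2 (Submodule.smul_mem_pointwise_smul y x ⊤ trivial)
    rw [LinearMap.mem_ker, DistribSMul.toLinearMap_apply, algebraMap_smul,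
      LocalizedModule.smul'_mk, LocalizedModule.map_mk, hxy, LocalizedModule.zero_mk]
  exact .of_surjective (Submodule.liftQ _ π hπ) (.of_comp (g := Submodule.mkQ _)
    (LocalizedModule.map_surjective _ _ (Submodule.mkQ_surjective _)))

end MinimalSupport

section GenericQuotient

variable {R : Type*} [CommRing R] [IsNoetherianRing R] {a : Ideal R} {X Y : Type*}
  [AddCommGroup X] [Module R X] [AddCommGroup Y] [Module R Y] {D : Set (PrimeSpectrum R)}

theorem FiniteOutside.finite_support_diff (h : FiniteOutside D X)
    (hD : ∀ p ∈ Module.support R X, ∀ q, p < q → q ∈ D) : (Module.support R X \ D).Finite := by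
  obtain ⟨N, hN, hND⟩ := h
  have := Module.Finite.iff_fg.2 hN
  have hsupp := Module.support_of_exact (LinearMap.exact_subtype_mkQ N) N.injective_subtype
    N.mkQ_surjective
  refine ((Ideal.finite_minimalPrimes_of_isNoetherianRing R (Module.annihilator R N)).preimage
    (f := PrimeSpectrum.asIdeal) fun _ _ _ _ => PrimeSpectrum.ext).subset fun q hq => ?_
  have hqN : q ∈ Module.support R N := (hsupp ▸ hq.1).resolve_right fun h => hq.2 (hND h)
  obtain ⟨p, hp, hpq⟩ := Ideal.exists_minimalPrimes_le (Module.mem_support_iff_of_finite.1 hqN)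
  have hpX : (⟨p, hp.1.1⟩ : PrimeSpectrum R) ∈ Module.support R X :=
    hsupp ▸ Or.inl (Module.mem_support_iff_of_finite.2 hp.1.2)
  obtain rfl : ⟨p, hp.1.1⟩ = q := eq_of_le_of_not_lt hpq fun h => hq.2 (hD _ hpX q h)
  exact hp

theorem eventually_finiteOutside_quotSMulTop_of_lt
    (ha : Module.support R X ⊆ PrimeSpectrum.zeroLocus a)
    (hD : ∀ p ∈ Module.support R X, ∀ q, p < q → q ∈ D)
    (h : FiniteOutside D (Submodule.torsionBySet R X (a : Set R))) :
    ∀ᶠ x in generic a, FiniteOutside D (QuotSMulTop x X) := by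
  have hfin : (Module.support R X \ D).Finite :=
    (h.finite_support_diff fun p hp => hD p
      (Module.support_subset_of_injective _ (Submodule.injective_subtype _) hp)).subset
      (Set.sdiff_subset_sdiff_left (support_subset_support_torsionBySet ha))
  have hev : ∀ᶠ x in generic a, ∀ q ∈ Module.support R X \ D,
      FiniteOutside {q}ᶜ (QuotSMulTop x X) := by
    refine (Filter.eventually_all_finite hfin).2 fun q hq =>
      eventually_finiteOutside_quotSMulTop ⟨hq.1, fun p hp hpq => ?_⟩ ha
        (h.mono (Set.subset_compl_singleton_iff.2 hq.2))
    exact (eq_of_le_of_not_lt hpq fun hlt => hq.2 (hD p hp q hlt)).ge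
  refine hev.mono fun x hx => .of_finite_union hfin ?_ hx
  rw [Set.sdiff_union_self]
  exact (Module.support_subset_of_surjective _ (Submodule.mkQ_surjective _)).trans
    Set.subset_union_left

theorem FiniteOutside.torsionBySet_quotient {N : Submodule R X} (hN : N.FG)
    (h : FiniteOutside D (Submodule.torsionBySet R X (a : Set R))) :
    FiniteOutside D (Submodule.torsionBySet R (X ⧸ N) (a : Set R)) := by
  have := Module.Finite.iff_fg.2 hN
  let P := (Submodule.torsionBySet R (X ⧸ N) (a : Set R)).comap N.mkQ
  have hP : FiniteOutside D P := .of_forall_smul_mem (P := N) .of_finite h fun x hx r hr =>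
    (Submodule.Quotient.mk_eq_zero N).1 ((Submodule.mem_torsionBySet_iff _ _).1 hx ⟨r, hr⟩)
  refine hP.of_surjective (N.mkQ.restrict fun x hx => hx) fun ⟨y, hy⟩ => ?_
  obtain ⟨x, rfl⟩ := N.mkQ_surjective y
  exact ⟨⟨x, hy⟩, rfl⟩

end GenericQuotient

section AlmostCofinite

variable (R : Type*) [CommRing R]

/-- The primes `p` with `dim R / p < e`. -/
def primesOfDimLT (e : ℕ) : Set (PrimeSpectrum R) := {p | Order.coheight p < e}

theorem primesOfDimLT_zero : primesOfDimLT R 0 = ∅ := by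
  simp [primesOfDimLT]

variable {R}

theorem mem_primesOfDimLT_of_lt {e : ℕ} {p q : PrimeSpectrum R} (h : p < q)
    (hp : p ∈ primesOfDimLT R (e + 1)) : q ∈ primesOfDimLT R e :=
  lt_of_add_lt_add_right ((Order.coheight_add_one_le h).trans_lt
    (hp.trans_eq (Nat.cast_succ e)))

/-- The class `𝒜_e` of `a`-torsion modules `X` that are finitely generated outside the primes of
dimension at most `e` and whose submodule `0 :_X a` is finitely generated even outside the primes of
dimension less than `e`. -/
structure IsAlmostCofinite (a : Ideal R) (e : ℕ) (X : Type*) [AddCommGroup X] [Module R X] :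
    Prop where
  support_subset : Module.support R X ⊆ PrimeSpectrum.zeroLocus a
  finiteOutside : FiniteOutside (primesOfDimLT R (e + 1)) X
  finiteOutside_torsionBySet :
    FiniteOutside (primesOfDimLT R e) (Submodule.torsionBySet R X (a : Set R))

namespace IsAlmostCofinite

variable {a : Ideal R} {e : ℕ} {X Y : Type*}
  [AddCommGroup X] [Module R X] [AddCommGroup Y] [Module R Y] [IsNoetherianRing R]

theorem of_injective (f : X →ₗ[R] Y) (hf : Function.Injective f) (h : IsAlmostCofinite a e Y) :
    IsAlmostCofinite a e X where
  support_subset := (Module.support_subset_of_injective f hf).trans h.support_subset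
  finiteOutside := h.finiteOutside.of_injective f hf
  finiteOutside_torsionBySet := h.finiteOutside_torsionBySet.of_injective
    (torsionBySetMap (a : Set R) f) (torsionBySetMap_injective _ hf)

theorem of_finite [Module.Finite R X] (ha : Module.support R X ⊆ PrimeSpectrum.zeroLocus a) :
    IsAlmostCofinite a e X :=
  ⟨ha, .of_finite, .of_finite⟩

theorem eventually_finiteOutside_quotSMulTop (h : IsAlmostCofinite a e X) :
    ∀ᶠ x in generic a, FiniteOutside (primesOfDimLT R e) (QuotSMulTop x X) := by
  obtain ⟨N, hN, hs⟩ := h.finiteOutside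
  have := Module.Finite.iff_fg.2 hN
  have ha : Module.support R (X ⧸ N) ⊆ PrimeSpectrum.zeroLocus a :=
    (Module.support_subset_of_surjective _ N.mkQ_surjective).trans h.support_subset
  refine (eventually_finiteOutside_quotSMulTop_of_lt ha (fun p hp q hpq =>
    mem_primesOfDimLT_of_lt hpq (hs hp)) (h.finiteOutside_torsionBySet.torsionBySet_quotient
      hN)).mono fun x hx => ?_
  exact .of_exact (QuotSMulTop.map_exact x (LinearMap.exact_subtype_mkQ N) N.mkQ_surjective)
    .of_finite hx

end IsAlmostCofinite
end AlmostCofinite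

section QuotientClosure

open scoped Pointwise

variable {R : Type*} [CommRing R] {X Y : Type*} [AddCommGroup X] [Module R X] [AddCommGroup Y]
  [Module R Y]

theorem exact_subtype_torsionBySet_lsmul (x : R) :
    Function.Exact (Submodule.torsionBySet R X {x}).subtype (LinearMap.lsmul R X x) := by
  rw [LinearMap.exact_iff, Submodule.range_subtype, Submodule.torsionBySet_singleton_eq]
  rfl

theorem exact_lsmul_mkQ_smul_top (x : R) :
    Function.Exact (LinearMap.lsmul R X x) (Submodule.mkQ (x • ⊤ : Submodule R X)) := by
  rw [LinearMap.exact_iff, Submodule.ker_mkQ, LinearMap.range_eq_map]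
  rfl

theorem exists_exact_torsionBySetMap_singleton {f : X →ₗ[R] Y} (hf : Function.Surjective f)
    (x : R) : ∃ δ : Submodule.torsionBySet R Y {x} →ₗ[R] QuotSMulTop x f.ker,
      Function.Exact (torsionBySetMap {x} f) δ :=
  ⟨_, SnakeLemma.exact_δ'_right _ _ _ _ f (LinearMap.exact_subtype_ker_map f) _ f
    (LinearMap.exact_subtype_ker_map f) (LinearMap.ext (map_smul f.ker.subtype x))
    (LinearMap.ext (map_smul f x)) _ (exact_subtype_torsionBySet_lsmul x) _
    (exact_subtype_torsionBySet_lsmul x) _ (exact_lsmul_mkQ_smul_top x) hf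
    f.ker.injective_subtype _ rfl (Submodule.injective_subtype _)⟩

variable [IsNoetherianRing R] {a : Ideal R} {e : ℕ}

theorem FiniteOutside.torsionBySet_of_surjective {D : Set (PrimeSpectrum R)} {x : R} (hx : x ∈ a)
    {f : X →ₗ[R] Y} (hf : Function.Surjective f) (hker : FiniteOutside D (QuotSMulTop x f.ker))
    (h : FiniteOutside D (Submodule.torsionBySet R (torsionBySetMap {x} f).range (a : Set R))) :
    FiniteOutside D (Submodule.torsionBySet R Y (a : Set R)) := by
  obtain ⟨δ, hδ⟩ := exists_exact_torsionBySetMap_singleton hf x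
  have hle : Submodule.torsionBySet R Y (a : Set R) ≤ Submodule.torsionBySet R Y {x} :=
    Submodule.torsionBySet_le_torsionBySet_of_subset (Set.singleton_subset_iff.2 hx)
  refine .of_exact (f := torsionBySetMap (a : Set R) ((Submodule.torsionBySet R Y {x}).subtype ∘ₗ
    (torsionBySetMap {x} f).range.subtype)) (g := δ ∘ₗ Submodule.inclusion hle) (fun y => ?_) h hker
  constructor
  · intro hy
    refine ⟨⟨⟨Submodule.inclusion hle y, (hδ _).1 hy⟩, ?_⟩, rfl⟩
    exact (Submodule.mem_torsionBySet_iff _ _).2 fun r => Subtype.ext (Subtype.ext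
      ((Submodule.mem_torsionBySet_iff _ _).1 y.2 r))
  · rintro ⟨z, rfl⟩
    exact (hδ _).2 z.1.2

-- Noetherian induction on an ideal `b` killing `X`: for a generic `x ∈ a`, passing from `X → Y` to
-- the map from `0 :_X x` onto its image in `0 :_Y x` enlarges `b` to `b + (x)`.
theorem IsAlmostCofinite.finiteOutside_torsionBySet_of_surjective (f : X →ₗ[R] Y)
    (hf : Function.Surjective f) (h : IsAlmostCofinite a e X) :
    FiniteOutside (primesOfDimLT R e) (Submodule.torsionBySet R Y (a : Set R)) := by
  obtain ⟨b, hb⟩ : ∃ b : Ideal R, b ≤ Module.annihilator R X := ⟨⊥, bot_le⟩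
  induction b using WellFoundedGT.induction generalizing X Y with | ind b ih
  by_cases hab : a ≤ b
  · refine .of_injective _ (Submodule.injective_subtype _) (.of_surjective f hf ?_)
    refine .of_pow_smul_eq_zero 1 h.finiteOutside_torsionBySet fun x r hr => ?_
    exact Module.mem_annihilator.1 (hb (hab (pow_one a ▸ hr))) x
  have hker : IsAlmostCofinite a e f.ker := h.of_injective _ f.ker.injective_subtype
  obtain ⟨x, hxa, hxb, hx⟩ :=
    exists_notMem_of_eventually_generic hab hker.eventually_finiteOutside_quotSMulTop
  refine .torsionBySet_of_surjective hxa hf hx (ih (b ⊔ Ideal.span {x}) ?_ _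
    (torsionBySetMap {x} f).surjective_rangeRestrict
    (h.of_injective _ (Submodule.injective_subtype _)) ?_)
  · exact lt_of_le_of_ne le_sup_left fun h => hxb (h ▸ Ideal.mem_sup_right
      (Ideal.mem_span_singleton_self x))
  · refine sup_le (hb.trans ?_) ((Ideal.span_singleton_le_iff_mem _).2 ?_)
    · exact LinearMap.annihilator_le_of_injective _ (Submodule.injective_subtype _)
    · exact Module.mem_annihilator.2 fun u => Subtype.ext
        ((Submodule.mem_torsionBySet_iff _ _).1 u.2 ⟨x, rfl⟩)

end QuotientClosure

/-! ### Hypercohomology in the derived category -/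

section Triangle

variable {C : Type*} [Category* C] [Preadditive C] [HasZeroObject C] [HasShift C ℤ]
  [∀ n : ℤ, (shiftFunctor C n).Additive] [Pretriangulated C]

theorem distTriang_of_iso_obj₁ {X X' Y Z : C} {f : X ⟶ Y} {g : Y ⟶ Z} {h : Z ⟶ X⟦(1 : ℤ)⟧}
    (hT : Triangle.mk f g h ∈ distTriang C) (e : X ≅ X') :
    Triangle.mk (e.inv ≫ f) g (h ≫ e.hom⟦1⟧') ∈ distTriang C :=
  isomorphic_distinguished _ hT _ (Triangle.isoMk _ _ e.symm (Iso.refl Y) (Iso.refl Z)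
    (Category.comp_id _) ((Category.comp_id _).trans (Category.id_comp _).symm)
    ((((shiftFunctor C (1 : ℤ)).mapIso e).comp_inv_eq.2 rfl).trans (Category.id_comp h).symm))

variable {R : Type*} [CommRing R] [IsNoetherianRing R] [Linear R C]

theorem finite_hom_obj₂ {T : Triangle C} (hT : T ∈ distTriang C) (A : C)
    (h₁ : Module.Finite R (A ⟶ T.obj₁)) (h₃ : Module.Finite R (A ⟶ T.obj₃)) :
    Module.Finite R (A ⟶ T.obj₂) := by
  have hexact : Function.Exact (Linear.rightComp R A T.mor₁) (Linear.rightComp R A T.mor₂) := by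
    refine fun f => ⟨fun hf => ?_, ?_⟩
    · obtain ⟨g, rfl⟩ := T.coyoneda_exact₂ hT f hf
      exact ⟨g, rfl⟩
    · rintro ⟨g, rfl⟩
      simp only [Linear.rightComp_apply, Category.assoc, comp_distTriang_mor_zero₁₂ _ hT, comp_zero]
  exact (FiniteOutside.of_exact hexact .of_finite .of_finite).finite

end Triangle

instance linear_homologyFunctor_homologicalComplex (R : Type*) [Semiring R] (C : Type*)
    [Category* C] [Preadditive C] [Linear R C] [CategoryWithHomology C] {ι : Type*}
    (c : ComplexShape ι) (i : ι) :
    (HomologicalComplex.homologyFunctor C c i).Linear R where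
  map_smul f r :=
    ShortComplex.homologyMap_smul ((HomologicalComplex.shortComplexFunctor C c i).map f) r

section HyperExt

variable {R : Type u} [CommRing R] [HasDerivedCategory.{w} (ModuleCat.{u} R)]

/-- The hypercohomology module `Ext^n_R(A, K)` of an object `K` of the derived category. -/
abbrev hyperExt (A : ModuleCat.{u} R) (K : DerivedCategory (ModuleCat.{u} R)) (n : ℤ) : Type w :=
  (singleFunctor (ModuleCat.{u} R) 0).obj A ⟶ K⟦n⟧

/-- The `n`-th cohomology module of an object of the derived category. -/
noncomputable abbrev cohomology (K : DerivedCategory (ModuleCat.{u} R)) (n : ℤ) : ModuleCat.{u} R :=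
  (homologyFunctor (ModuleCat.{u} R) n).obj K

instance linear_homologyFunctor (n : ℤ) : (homologyFunctor (ModuleCat.{u} R) n).Linear R := by
  have e := homologyFunctorFactors (ModuleCat.{u} R) n
  have : Localization.Lifting Q (HomologicalComplex.quasiIso (ModuleCat.{u} R) (.up ℤ))
    (HomologicalComplex.homologyFunctor (ModuleCat.{u} R) (ComplexShape.up ℤ) n)
    (homologyFunctor (ModuleCat.{u} R) n) := ⟨e⟩
  exact (Localization.functor_linear_iff Q
    (HomologicalComplex.quasiIso (ModuleCat.{u} R) (.up ℤ)) R
    (HomologicalComplex.homologyFunctor (ModuleCat.{u} R) (ComplexShape.up ℤ) n) _).1 inferInstance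

variable {A : ModuleCat.{u} R} {K L : DerivedCategory (ModuleCat.{u} R)}

/-- Dimension shifting: `Ext^n(A, K[m]) ≃ Ext^(m+n)(A, K)`. -/
noncomputable def hyperExtShift (A : ModuleCat.{u} R) (K : DerivedCategory (ModuleCat.{u} R))
    {m n k : ℤ} (h : m + n = k) : hyperExt A (K⟦m⟧) n ≃ₗ[R] hyperExt A K k :=
  Linear.homCongr R (Iso.refl _)
    ((shiftFunctorAdd' (DerivedCategory (ModuleCat.{u} R)) m n k h).symm.app K)

/-- An isomorphism `K ≅ L` induces `Ext^n(A, K) ≃ Ext^n(A, L)`. -/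
noncomputable def hyperExtCongr (A : ModuleCat.{u} R) (e : K ≅ L) (n : ℤ) :
    hyperExt A K n ≃ₗ[R] hyperExt A L n :=
  Linear.homCongr R (Iso.refl _) ((shiftFunctor _ n).mapIso e)

theorem hyperExt_smul_eq_zero {x : R} (hx : ∀ y : A, x • y = 0) {n : ℤ} (f : hyperExt A K n) :
    x • f = 0 := by
  have : x • 𝟙 A = 0 := by ext y; exact hx y
  rw [← Category.id_comp f, ← Linear.smul_comp, ← (singleFunctor _ 0).map_id,
    ← (singleFunctor _ 0).map_smul, this, Functor.map_zero, zero_comp]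

variable [IsNoetherianRing R] {T : Triangle (DerivedCategory (ModuleCat.{u} R))}

theorem finite_hyperExt_obj₂ (hT : T ∈ distTriang _) (n : ℤ)
    (h₁ : Module.Finite R (hyperExt A T.obj₁ n)) (h₃ : Module.Finite R (hyperExt A T.obj₃ n)) :
    Module.Finite R (hyperExt A T.obj₂ n) :=
  finite_hom_obj₂ (Triangle.shift_distinguished T hT n) _ h₁ h₃

theorem finite_hyperExt_obj₃ (hT : T ∈ distTriang _) {n₀ n₁ : ℤ} (h : 1 + n₀ = n₁)
    (h₂ : Module.Finite R (hyperExt A T.obj₂ n₀)) (h₁ : Module.Finite R (hyperExt A T.obj₁ n₁)) :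
    Module.Finite R (hyperExt A T.obj₃ n₀) :=
  finite_hyperExt_obj₂ (rot_of_distTriang _ hT) n₀ h₂
    ((Module.Finite.equiv_iff (hyperExtShift A T.obj₁ h)).2 h₁)

theorem finite_hyperExt_obj₁ (hT : T ∈ distTriang _) {n₀ n₁ : ℤ} (h : -1 + n₁ = n₀)
    (h₃ : Module.Finite R (hyperExt A T.obj₃ n₀)) (h₂ : Module.Finite R (hyperExt A T.obj₂ n₁)) :
    Module.Finite R (hyperExt A T.obj₁ n₁) :=
  finite_hyperExt_obj₂ (inv_rot_of_distTriang _ hT) n₁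
    ((Module.Finite.equiv_iff (hyperExtShift A T.obj₃ h)).2 h₃) h₂

end HyperExt

section Peel

variable {R : Type u} [CommRing R] [HasDerivedCategory.{w} (ModuleCat.{u} R)]

theorem isIso_homologyMap_mor₁ {T : Triangle (DerivedCategory (ModuleCat.{u} R))}
    (hT : T ∈ distTriang _) {n₀ n₁ : ℤ} (h : n₀ + 1 = n₁) (h₀ : IsZero (cohomology T.obj₃ n₀))
    (h₁ : IsZero (cohomology T.obj₃ n₁)) :
    IsIso ((homologyFunctor (ModuleCat.{u} R) n₁).map T.mor₁) := by
  have := (HomologySequence.mono_homologyMap_mor₁_iff T hT n₀ n₁ h).2 (h₀.eq_of_src _ _)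
  have := (HomologySequence.epi_homologyMap_mor₁_iff T hT n₁).2 (h₁.eq_of_tgt _ _)
  exact isIso_of_mono_of_epi _

theorem isIso_homologyMap_mor₂ {T : Triangle (DerivedCategory (ModuleCat.{u} R))}
    (hT : T ∈ distTriang _) {n₀ n₁ : ℤ} (h : n₀ + 1 = n₁) (h₀ : IsZero (cohomology T.obj₁ n₀))
    (h₁ : IsZero (cohomology T.obj₁ n₁)) :
    IsIso ((homologyFunctor (ModuleCat.{u} R) n₀).map T.mor₂) := by
  have := (HomologySequence.mono_homologyMap_mor₂_iff T hT n₀).2 (h₀.eq_of_src _ _)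
  have := (HomologySequence.epi_homologyMap_mor₂_iff T hT n₀ n₁ h).2 (h₁.eq_of_tgt _ _)
  exact isIso_of_mono_of_epi _

theorem isGE_obj₁ {T : Triangle (DerivedCategory (ModuleCat.{u} R))} (hT : T ∈ distTriang _)
    {m : ℤ} (h₂ : T.obj₂.IsGE m) (h₃ : T.obj₃.IsGE (m - 1)) : T.obj₁.IsGE m := by
  rw [isGE_iff] at *
  intro i hi
  exact (HomologySequence.exact₁ T hT (i - 1) i).isZero_X₂ ((h₃ (i - 1) (by lia)).eq_of_src _ _)
    ((h₂ i hi).eq_of_tgt _ _)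

theorem exists_iso_singleFunctor_cohomology (K : DerivedCategory (ModuleCat.{u} R)) (m : ℤ)
    [K.IsGE m] [K.IsLE m] :
    Nonempty (K ≅ (singleFunctor (ModuleCat.{u} R) m).obj (cohomology K m)) := by
  obtain ⟨Y, ⟨e⟩⟩ := exists_iso_singleFunctor_obj_of_isGE_of_isLE K m
  exact ⟨e ≪≫ (singleFunctor _ m).mapIso ((homologyFunctor _ m).mapIso e ≪≫
    (singleFunctorCompHomologyFunctorIso _ m).app Y).symm⟩

theorem exists_distTriang_singleFunctor_cohomology (K : DerivedCategory (ModuleCat.{u} R)) (m : ℤ)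
    [K.IsGE m] :
    ∃ (K' : DerivedCategory (ModuleCat.{u} R)) (f : (singleFunctor _ m).obj (cohomology K m) ⟶ K)
      (g : K ⟶ K') (h : K' ⟶ ((singleFunctor _ m).obj (cohomology K m))⟦(1 : ℤ)⟧),
      K'.IsGE (m + 1) ∧ Triangle.mk f g h ∈ distTriang _ ∧
      (∀ i, Epi ((homologyFunctor (ModuleCat.{u} R) i).map g)) ∧
      ∀ i, m < i → IsIso ((homologyFunctor (ModuleCat.{u} R) i).map g) := by
  obtain ⟨X, K', hX, hK', f, g, h, hT⟩ := TStructure.t.exists_triangle K m (m + 1) rfl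
  have : X.IsLE m := ⟨hX⟩
  have : K'.IsGE (m + 1) := ⟨hK'⟩
  have : X.IsGE m := isGE_obj₁ hT ‹_› (TStructure.t.isGE_of_ge K' (m - 1) (m + 1))
  obtain ⟨e⟩ := exists_iso_singleFunctor_cohomology X m
  have : IsIso ((homologyFunctor (ModuleCat.{u} R) m).map f) :=
    isIso_homologyMap_mor₁ hT (sub_add_cancel m 1) (isZero_of_isGE K' (m + 1) _ (by lia))
      (isZero_of_isGE K' (m + 1) _ (by lia))
  let e' : X ≅ (singleFunctor (ModuleCat.{u} R) m).obj (cohomology K m) :=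
    e ≪≫ (singleFunctor _ m).mapIso (asIso ((homologyFunctor (ModuleCat.{u} R) m).map f))
  have hiso (i : ℤ) (hi : m < i) : IsIso ((homologyFunctor (ModuleCat.{u} R) i).map g) :=
    isIso_homologyMap_mor₂ hT rfl (isZero_of_isLE X m _ hi) (isZero_of_isLE X m _ (by lia))
  refine ⟨K', e'.inv ≫ f, g, h ≫ e'.hom⟦1⟧', inferInstance, distTriang_of_iso_obj₁ hT e',
    fun i => ?_, hiso⟩
  obtain hi | hi := lt_or_ge m i
  · have := hiso i hi
    infer_instance
  · exact ⟨fun _ _ _ => (isZero_of_isGE K' (m + 1) i (by lia)).eq_of_src _ _⟩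

variable (A Y : ModuleCat.{u} R)

/-- On a module `Y` placed in degree `m`, hypercohomology is `Ext` up to a shift of degree. -/
noncomputable def hyperExtSingle (m : ℤ) (k : ℕ) {n : ℤ} (h : m + k = n) :
    hyperExt A ((singleFunctor (ModuleCat.{u} R) m).obj Y) n ≃ₗ[R] Abelian.Ext A Y k :=
  (hyperExtShift A _ h).symm ≪≫ₗ
    hyperExtCongr A (((singleFunctors (ModuleCat.{u} R)).shiftIso m 0 m (add_zero m)).app Y) k ≪≫ₗ
    (Abelian.Ext.homLinearEquiv (R := R)).symm

theorem subsingleton_hyperExt (K : DerivedCategory (ModuleCat.{u} R)) (m : ℤ) [K.IsGE m] {n : ℤ}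
    (h : n < m) : Subsingleton (hyperExt A K n) := by
  have := TStructure.t.isGE_shift K m n (m - n)
  exact subsingleton_of_forall_eq 0 fun f => TStructure.t.zero_of_isLE_of_isGE f 0 (m - n)
    (by lia) inferInstance this

end Peel

section HomQuotient

variable {R : Type*} [CommRing R] (a : Ideal R) (X : Type*) [AddCommGroup X] [Module R X]

/-- `Hom_R(R/a, X)` is the submodule `0 :_X a`. -/
noncomputable def homQuotientEquiv :
    ((R ⧸ a) →ₗ[R] X) ≃ₗ[R] Submodule.torsionBySet R X (a : Set R) where
  toFun f := ⟨f 1, (Submodule.mem_torsionBySet_iff _ _).2 fun r => by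
    rw [← map_smul, Algebra.smul_def, mul_one, Ideal.Quotient.algebraMap_eq,
      Ideal.Quotient.eq_zero_iff_mem.2 r.2, map_zero]⟩
  map_add' _ _ := rfl
  map_smul' _ _ := rfl
  invFun x := a.liftQ (LinearMap.toSpanSingleton R X x) fun r hr =>
    (Submodule.mem_torsionBySet_iff _ _).1 x.2 ⟨r, hr⟩
  left_inv f := by ext; exact one_smul _ _
  right_inv x := Subtype.ext (one_smul _ _)

/-- `Ext^0_R(R/a, X)` is the submodule `0 :_X a`. -/
noncomputable def extZeroQuotientEquiv {R : Type u} [CommRing R] (a : Ideal R)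
    (X : ModuleCat.{u} R) : Abelian.Ext.{u} (ModuleCat.of R (R ⧸ a)) X 0 ≃ₗ[R]
      Submodule.torsionBySet R X (a : Set R) :=
  Abelian.Ext.linearEquiv₀ ≪≫ₗ ModuleCat.homLinearEquiv (S := R) ≪≫ₗ homQuotientEquiv a X

end HomQuotient

section HyperExtFiniteness

variable {R : Type u} [CommRing R] [HasDerivedCategory.{w} (ModuleCat.{u} R)]

theorem finite_hyperExt_singleFunctor {A Y : ModuleCat.{u} R}
    (h : ∀ k, Module.Finite R (Abelian.Ext.{u} A Y k)) (m n : ℤ) :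
    Module.Finite R (hyperExt A ((singleFunctor (ModuleCat.{u} R) m).obj Y) n) := by
  obtain hn | hn := lt_or_ge n m
  · have := subsingleton_hyperExt A ((singleFunctor (ModuleCat.{u} R) m).obj Y) m hn
    infer_instance
  · obtain ⟨k, rfl⟩ := Int.le.dest hn
    have := h k
    exact .equiv (hyperExtSingle A Y m k rfl).symm

variable [IsNoetherianRing R]

theorem finite_hyperExt_of_finite_cohomology (A : ModuleCat.{u} R) [Module.Finite R A]
    (K : DerivedCategory (ModuleCat.{u} R)) (m : ℤ) [K.IsGE m] {n : ℤ}
    (h : ∀ i ≤ n, Module.Finite R (cohomology K i)) : Module.Finite R (hyperExt A K n) := by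
  obtain ⟨k, hk⟩ : ∃ k : ℕ, n < m + k := ⟨(n - m + 1).toNat, by lia⟩
  induction k generalizing K m with
  | zero =>
    have := subsingleton_hyperExt A K m (n := n) (by lia)
    infer_instance
  | succ k ih =>
    obtain hn | hn := lt_or_ge n m
    · have := subsingleton_hyperExt A K m hn
      infer_instance
    obtain ⟨K', _, _, _, _, hT, hepi, -⟩ := exists_distTriang_singleFunctor_cohomology K m
    have := h m hn
    refine finite_hyperExt_obj₂ hT n (finite_hyperExt_singleFunctor (fun _ => inferInstance) m n)
      (ih K' (m + 1) (fun i hi => ?_) (by lia))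
    have := h i hi
    exact .of_surjective _ ((ModuleCat.epi_iff_surjective _).1 (hepi i))

theorem finite_hyperExt_iff_finite_torsionBySet_cohomology {a : Ideal R}
    (K : DerivedCategory (ModuleCat.{u} R)) (m : ℤ) [K.IsGE m] :
    Module.Finite R (hyperExt (ModuleCat.of R (R ⧸ a)) K m) ↔
      Module.Finite R (Submodule.torsionBySet R (cohomology K m) (a : Set R)) := by
  obtain ⟨K', _, _, _, _, hT, -⟩ := exists_distTriang_singleFunctor_cohomology K m
  let A := ModuleCat.of R (R ⧸ a)
  have hK' {n : ℤ} (hn : n < m + 1) : Module.Finite R (hyperExt A K' n) := by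
    have := subsingleton_hyperExt A K' (m + 1) hn
    infer_instance
  let e := hyperExtSingle A (cohomology K m) m 0 (add_zero m) ≪≫ₗ
    extZeroQuotientEquiv a (cohomology K m)
  refine ⟨fun h => ?_, fun h => ?_⟩
  · have : Module.Finite R (hyperExt A ((singleFunctor _ m).obj (cohomology K m)) m) :=
      finite_hyperExt_obj₁ hT (neg_add_eq_sub 1 m) (hK' (by lia)) h
    exact .equiv e
  · exact finite_hyperExt_obj₂ hT m (.equiv e.symm) (hK' (by lia))

theorem finite_cohomology_of_finite_hyperExt {a : Ideal R} (K : DerivedCategory (ModuleCat.{u} R))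
    (m : ℤ) [K.IsGE m] (ha : ∀ i, a ≤ (Module.annihilator R (cohomology K i)).radical)
    {n : ℤ} (h : ∀ i ≤ n, Module.Finite R (hyperExt (ModuleCat.of R (R ⧸ a)) K i)) :
    ∀ i ≤ n, Module.Finite R (cohomology K i) := by
  obtain ⟨k, hk⟩ : ∃ k : ℕ, n < m + k := ⟨(n - m + 1).toNat, by lia⟩
  induction k generalizing K m with
  | zero =>
    intro i hi
    have := ModuleCat.subsingleton_of_isZero (isZero_of_isGE K m i (by lia))
    infer_instance
  | succ k ih =>
    intro i hi
    obtain him | him := lt_or_ge i m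
    · have := ModuleCat.subsingleton_of_isZero (isZero_of_isGE K m i him)
      infer_instance
    have hm : Module.Finite R (cohomology K m) := by
      have := (finite_hyperExt_iff_finite_torsionBySet_cohomology K m).1 (h m (him.trans hi))
      obtain ⟨k, hk⟩ := Ideal.exists_pow_le_of_le_radical_of_fg (ha m) (IsNoetherian.noetherian a)
      exact (FiniteOutside.of_pow_smul_eq_zero k .of_finite
        fun x r hr => Module.mem_annihilator.1 (hk hr) x).finite
    obtain rfl | him := him.eq_or_lt
    · exact hm
    obtain ⟨K', _, g, _, _, hT, hepi, hiso⟩ := exists_distTriang_singleFunctor_cohomology K m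
    have := hiso i him
    have := ih K' (m + 1) (fun j => ?_) (fun j hj => ?_) (by lia) i hi
    · exact .equiv (asIso ((homologyFunctor (ModuleCat.{u} R) i).map g)).toLinearEquiv.symm
    · exact (ha j).trans (Ideal.radical_mono (LinearMap.annihilator_le_of_surjective _
        ((ModuleCat.epi_iff_surjective _).1 (hepi j))))
    · exact finite_hyperExt_obj₃ hT rfl (h j hj)
        (finite_hyperExt_singleFunctor (fun _ => inferInstance) m _)

end HyperExtFiniteness

section ExactSequences

variable {R : Type*} [CommRing R] {X Y Z : Type*} [AddCommGroup X] [Module R X] [AddCommGroup Y]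
  [Module R Y] [AddCommGroup Z] [Module R Z] {f : X →ₗ[R] Y} {g : Y →ₗ[R] Z}

theorem support_subset_union_of_exact (h : Function.Exact f g) :
    Module.support R Y ⊆ Module.support R X ∪ Module.support R Z := by
  rw [Module.support_of_exact (LinearMap.exact_subtype_mkQ f.range) f.range.injective_subtype
    f.range.mkQ_surjective]
  refine Set.union_subset_union (Module.support_subset_of_surjective _ f.surjective_rangeRestrict)
    (Module.support_subset_of_injective (f.range.liftQ g h.linearMap_ker_eq.ge) ?_)
  rw [← LinearMap.ker_eq_bot, Submodule.ker_liftQ_eq_bot' _ _ h.linearMap_ker_eq.symm]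

theorem mul_mem_annihilator_of_exact (h : Function.Exact f g) {r s : R}
    (hr : r ∈ Module.annihilator R X) (hs : s ∈ Module.annihilator R Z) :
    r * s ∈ Module.annihilator R Y := by
  refine Module.mem_annihilator.2 fun y => ?_
  obtain ⟨x, hx⟩ := (h (s • y)).1 (by rw [map_smul, Module.mem_annihilator.1 hs])
  rw [mul_smul, ← hx, ← map_smul, Module.mem_annihilator.1 hr, map_zero]

end ExactSequences

section KoszulCocone

open scoped Pointwise

variable {R : Type u} [CommRing R] [HasDerivedCategory.{w} (ModuleCat.{u} R)]
  {K L : DerivedCategory (ModuleCat.{u} R)} {x : R} {g : L ⟶ K} {h : K ⟶ L⟦(1 : ℤ)⟧}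

theorem homologyFunctor_map_smul_id (x : R) (K : DerivedCategory (ModuleCat.{u} R)) (n : ℤ) :
    (homologyFunctor (ModuleCat.{u} R) n).map (x • 𝟙 K) = x • 𝟙 (cohomology K n) := by
  rw [Functor.map_smul, CategoryTheory.Functor.map_id]

theorem exists_exact_cohomology (hT : Triangle.mk g (x • 𝟙 K) h ∈ distTriang _) {n₀ n₁ : ℤ}
    (hn : n₀ + 1 = n₁) :
    ∃ (φ : QuotSMulTop x (cohomology K n₀) →ₗ[R] cohomology L n₁)
      (ψ : cohomology L n₁ →ₗ[R] Submodule.torsionBySet R (cohomology K n₁) {x}),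
      Function.Exact φ ψ ∧ Function.Surjective ψ := by
  let T := Triangle.mk g (x • 𝟙 K) h
  let δ : cohomology K n₀ →ₗ[R] cohomology L n₁ := (HomologySequence.δ T n₀ n₁ hn).hom
  let γ : cohomology L n₁ →ₗ[R] cohomology K n₁ := ((homologyFunctor _ n₁).map g).hom
  have hδγ : Function.Exact δ γ := (ShortComplex.ShortExact.moduleCat_exact_iff_function_exact _).1
    (HomologySequence.exact₁ T hT n₀ n₁ hn)
  have hγx : Function.Exact γ ((homologyFunctor _ n₁).map (x • 𝟙 K)).hom :=
    (ShortComplex.ShortExact.moduleCat_exact_iff_function_exact _).1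
      (HomologySequence.exact₂ T hT n₁)
  have hxδ : Function.Exact ((homologyFunctor _ n₀).map (x • 𝟙 K)).hom δ :=
    (ShortComplex.ShortExact.moduleCat_exact_iff_function_exact _).1
      (HomologySequence.exact₃ T hT n₀ n₁ hn)
  rw [homologyFunctor_map_smul_id] at hγx hxδ
  have hδ : x • (⊤ : Submodule R _) ≤ δ.ker := by
    rintro _ ⟨y, -, rfl⟩
    exact hxδ.apply_apply_eq_zero y
  have hγ : ∀ y, γ y ∈ Submodule.torsionBySet R (cohomology K n₁) {x} := fun y =>
    (Submodule.mem_torsionBySet_iff _ _).2 fun ⟨r, hr⟩ => by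
      obtain rfl : r = x := hr
      exact hγx.apply_apply_eq_zero y
  refine ⟨Submodule.liftQ _ δ hδ, γ.codRestrict _ hγ, fun y => ?_, fun ⟨z, hz⟩ => ?_⟩
  · rw [← Submodule.mkQ_surjective _ |>.range_comp]
    exact Subtype.ext_iff.trans (hδγ y)
  · obtain ⟨y, hy⟩ := (hγx z).1 ((Submodule.mem_torsionBySet_iff _ _).1 hz ⟨x, rfl⟩)
    exact ⟨y, Subtype.ext hy⟩

/-- The ideal of all elements acting as zero on every cohomology module of `K`. -/
noncomputable def cohomologyAnnihilator (K : DerivedCategory (ModuleCat.{u} R)) : Ideal R :=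
  ⨅ n, Module.annihilator R (cohomology K n)

theorem mul_mem_cohomologyAnnihilator (hT : Triangle.mk g (x • 𝟙 K) h ∈ distTriang _) {y : R}
    (hy : ∀ n, y ∈ Module.annihilator R (QuotSMulTop x (cohomology K n)))
    (hy' : ∀ n, y ∈ Module.annihilator R (Submodule.torsionBySet R (cohomology K n) {x})) :
    y * y ∈ cohomologyAnnihilator L := by
  refine Submodule.mem_iInf _ |>.2 fun n => ?_
  obtain ⟨φ, ψ, hφψ, -⟩ := exists_exact_cohomology hT (sub_add_cancel n 1)
  exact mul_mem_annihilator_of_exact hφψ (hy _) (hy' _)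

theorem radical_cohomologyAnnihilator_lt (hT : Triangle.mk g (x • 𝟙 K) h ∈ distTriang _)
    (hx : x ∉ (cohomologyAnnihilator K).radical) :
    (cohomologyAnnihilator K).radical < (cohomologyAnnihilator L).radical := by
  refine lt_of_le_of_ne (Ideal.radical_le_radical_iff.2 fun y hy => ?_) fun h => hx (h ▸ ?_)
  · have hy := fun n => (Submodule.mem_iInf _).1 hy n
    refine ⟨2, pow_two y ▸ mul_mem_cohomologyAnnihilator hT (fun n => ?_) fun n => ?_⟩
    · exact LinearMap.annihilator_le_of_surjective _ (Submodule.mkQ_surjective _) (hy n)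
    · exact LinearMap.annihilator_le_of_injective _ (Submodule.injective_subtype _) (hy n)
  · refine ⟨2, pow_two x ▸ mul_mem_cohomologyAnnihilator hT (fun n => ?_) fun n => ?_⟩
    · refine Module.mem_annihilator.2 fun q => ?_
      obtain ⟨z, rfl⟩ := Submodule.mkQ_surjective _ q
      exact (Submodule.Quotient.mk_eq_zero _).2 (Submodule.smul_mem_pointwise_smul z x ⊤ trivial)
    · exact Module.mem_annihilator.2 fun z => Subtype.ext
        ((Submodule.mem_torsionBySet_iff _ _).1 z.2 ⟨x, rfl⟩)

end KoszulCocone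

section Induction

open scoped Pointwise

variable {R : Type u} [CommRing R] [HasDerivedCategory.{w} (ModuleCat.{u} R)]
  {K L : DerivedCategory (ModuleCat.{u} R)} {x : R} {g : L ⟶ K} {h : K ⟶ L⟦(1 : ℤ)⟧}

theorem finite_hyperExt_of_distTriang {A : ModuleCat.{u} R} (hxA : ∀ y : A, x • y = 0)
    (hT : Triangle.mk g (x • 𝟙 K) h ∈ distTriang _) {n : ℤ}
    (hL : Module.Finite R (hyperExt A L n)) : Module.Finite R (hyperExt A K n) := by
  let T := (Triangle.shiftFunctor _ n).obj (Triangle.mk g (x • 𝟙 K) h)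
  have : Module.Finite R ((singleFunctor (ModuleCat.{u} R) 0).obj A ⟶ T.obj₁) := hL
  refine .of_surjective (Linear.rightComp R ((singleFunctor (ModuleCat.{u} R) 0).obj A) T.mor₁)
    fun f => ?_
  have hf : f ≫ T.mor₂ = 0 := by
    change f ≫ (n.negOnePow • (x • 𝟙 K)⟦n⟧') = 0
    rw [Functor.map_smul, CategoryTheory.Functor.map_id, Linear.comp_units_smul, Linear.comp_smul,
      Category.comp_id, hyperExt_smul_eq_zero hxA, smul_zero]
  obtain ⟨f', hf'⟩ := T.coyoneda_exact₂ (Triangle.shift_distinguished _ hT n) f hf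
  exact ⟨f', hf'.symm⟩

variable [IsNoetherianRing R]

theorem FiniteOutside.cohomology_of_distTriang {D : Set (PrimeSpectrum R)}
    (hT : Triangle.mk g (x • 𝟙 K) h ∈ distTriang _) {n₀ n₁ : ℤ} (hn : n₀ + 1 = n₁)
    (h₀ : FiniteOutside D (QuotSMulTop x (cohomology K n₀)))
    (h₁ : FiniteOutside D (cohomology K n₁)) : FiniteOutside D (cohomology L n₁) := by
  obtain ⟨φ, ψ, hφψ, -⟩ := exists_exact_cohomology hT hn
  exact .of_exact hφψ h₀ (h₁.of_injective _ (Submodule.injective_subtype _))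

theorem IsAlmostCofinite.of_distTriang {a : Ideal R} (hx : x ∈ a)
    (hT : Triangle.mk g (x • 𝟙 K) h ∈ distTriang _) {e : ℕ} {n : ℤ}
    (ha : Module.support R (cohomology K n) ⊆ PrimeSpectrum.zeroLocus a)
    (hK : FiniteOutside (primesOfDimLT R (e + 1)) (cohomology K n))
    (hL : IsAlmostCofinite a e (cohomology L n)) : IsAlmostCofinite a e (cohomology K n) := by
  obtain ⟨-, ψ, -, hψ⟩ := exists_exact_cohomology hT (sub_add_cancel n 1)
  refine ⟨ha, hK, (hL.finiteOutside_torsionBySet_of_surjective ψ hψ).of_injective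
    (LinearMap.codRestrict _ (Submodule.inclusion
      (Submodule.torsionBySet_le_torsionBySet_of_subset (Set.singleton_subset_iff.2 hx)))
        fun z => (Submodule.mem_torsionBySet_iff _ _).2 fun r => Subtype.ext
          ((Submodule.mem_torsionBySet_iff _ _).1 z.2 r)) fun y z hyz => ?_⟩
  exact Subtype.ext (congrArg (fun t => t.1.1) hyz)

/-- Objects of `D^{≥ 0}` whose cohomology modules are `a`-torsion and for which `Ext^n(R/a, -)` is
finitely generated for all `n ≤ d`. -/
structure IsCofiniteUpTo (a : Ideal R) (d : ℕ) (K : DerivedCategory (ModuleCat.{u} R)) : Prop where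
  isGE : K.IsGE 0
  support_subset (n : ℤ) : Module.support R (cohomology K n) ⊆ PrimeSpectrum.zeroLocus a
  finite_hyperExt (n : ℤ) (hn : n ≤ d) :
    Module.Finite R (hyperExt (ModuleCat.of R (R ⧸ a)) K n)

namespace IsCofiniteUpTo

variable {a : Ideal R} {d : ℕ}

theorem of_distTriang (hK : IsCofiniteUpTo a d K)
    (hT : Triangle.mk g (x • 𝟙 K) h ∈ distTriang _) : IsCofiniteUpTo a d L where
  isGE := by
    have := hK.isGE
    exact isGE_obj₁ hT hK.isGE (TStructure.t.isGE_of_ge K (0 - 1) 0)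
  support_subset n := by
    obtain ⟨φ, ψ, hφψ, -⟩ := exists_exact_cohomology hT (sub_add_cancel n 1)
    refine (support_subset_union_of_exact hφψ).trans (Set.union_subset ?_ ?_)
    · exact (Module.support_subset_of_surjective _ (Submodule.mkQ_surjective _)).trans
        (hK.support_subset _)
    · exact (Module.support_subset_of_injective _ (Submodule.injective_subtype _)).trans
        (hK.support_subset _)
  finite_hyperExt n hn := finite_hyperExt_obj₁ hT (neg_add_eq_sub 1 n)
    (hK.finite_hyperExt _ (by lia)) (hK.finite_hyperExt n hn)

theorem finite_cohomology (hK : IsCofiniteUpTo a d K) (ha : a ≤ (cohomologyAnnihilator K).radical)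
    {n : ℤ} (hn : n ≤ d) : Module.Finite R (cohomology K n) := by
  have := hK.isGE
  exact finite_cohomology_of_finite_hyperExt K 0
    (fun i => ha.trans (Ideal.radical_mono (iInf_le _ i))) (fun i hi => hK.finite_hyperExt i hi)
    n hn

theorem exists_distTriang (hK : IsCofiniteUpTo a d K) (ha : ¬ a ≤ (cohomologyAnnihilator K).radical)
    {m : ℕ} (hg : ∀ i : ℕ, i ≤ m → FiniteOutside (primesOfDimLT R (d + 1 - i)) (cohomology K i))
    (h : ∀ i : ℕ, i < m → IsAlmostCofinite a (d - i) (cohomology K i)) :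
    ∃ x ∈ a, ∃ (L : DerivedCategory (ModuleCat.{u} R)) (g : L ⟶ K) (h : K ⟶ L⟦(1 : ℤ)⟧),
      Triangle.mk g (x • 𝟙 K) h ∈ distTriang _ ∧
      (cohomologyAnnihilator K).radical < (cohomologyAnnihilator L).radical ∧
      ∀ i : ℕ, i ≤ m → FiniteOutside (primesOfDimLT R (d + 1 - i)) (cohomology L i) := by
  obtain ⟨x, hxa, hxK, hx⟩ := exists_notMem_of_eventually_generic ha
    ((Filter.eventually_all_finite (Set.finite_Iio m)).2 fun i hi =>
      (h i hi).eventually_finiteOutside_quotSMulTop)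
  obtain ⟨L, g, h, hT⟩ := distinguished_cocone_triangle₁ (x • 𝟙 K)
  refine ⟨x, hxa, L, g, h, hT, radical_cohomologyAnnihilator_lt hT hxK, fun i hi => ?_⟩
  refine .cohomology_of_distTriang hT (sub_add_cancel _ 1) ?_ (hg i hi)
  cases i with
  | zero =>
    have := hK.isGE
    have := ModuleCat.subsingleton_of_isZero (isZero_of_isGE K 0 (↑(0 : ℕ) - 1) (by lia))
    exact .of_surjective _ (Submodule.mkQ_surjective _) .of_finite
  | succ i =>
    rw [Nat.add_sub_add_right, Nat.cast_succ, add_sub_cancel_right]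
    exact hx i hi

-- Dividing out a generic `x ∈ a` enlarges the radical of the annihilator of the cohomology, until
-- it contains `a` and the cohomology is finitely generated.
theorem isAlmostCofinite_cohomology {i : ℕ} (hi : i ≤ d) (hK : IsCofiniteUpTo a d K)
    (hg : ∀ j : ℕ, j ≤ i → FiniteOutside (primesOfDimLT R (d + 1 - j)) (cohomology K j)) :
    IsAlmostCofinite a (d - i) (cohomology K i) := by
  induction i using Nat.strong_induction_on generalizing K with | _ i ih
  obtain ⟨b, hb⟩ : ∃ b, b = (cohomologyAnnihilator K).radical := ⟨_, rfl⟩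
  induction b using WellFoundedGT.induction generalizing K with | ind b ihb
  by_cases ha : a ≤ (cohomologyAnnihilator K).radical
  · have := hK.finite_cohomology ha (n := i) (by lia)
    exact .of_finite (hK.support_subset i)
  obtain ⟨x, hx, L, g, h, hT, hlt, hL⟩ := hK.exists_distTriang ha hg fun j hj =>
    ih j hj (hj.le.trans hi) hK fun k hk => hg k (hk.trans hj.le)
  refine .of_distTriang hx hT (hK.support_subset i) ?_
    (ihb _ (hb ▸ hlt) (hK.of_distTriang hT) hL rfl)
  rw [← Nat.sub_add_comm hi]
  exact hg i le_rfl

theorem finite_hyperExt_of_finiteOutside (hK : IsCofiniteUpTo a d K)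
    (hg : ∀ i : ℕ, FiniteOutside (primesOfDimLT R (d + 1 - i)) (cohomology K i)) (n : ℤ) :
    Module.Finite R (hyperExt (ModuleCat.of R (R ⧸ a)) K n) := by
  obtain ⟨b, hb⟩ : ∃ b, b = (cohomologyAnnihilator K).radical := ⟨_, rfl⟩
  induction b using WellFoundedGT.induction generalizing K with | ind b ihb
  have := hK.isGE
  have hlarge (i : ℕ) (hi : d < i) : Module.Finite R (cohomology K i) := by
    have := hg i
    rw [Nat.sub_eq_zero_of_le hi, primesOfDimLT_zero] at this
    exact this.finite
  by_cases ha : a ≤ (cohomologyAnnihilator K).radical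
  · refine finite_hyperExt_of_finite_cohomology _ K 0 fun i _ => ?_
    obtain hi | hi := le_or_gt i d
    · exact hK.finite_cohomology ha hi
    · obtain ⟨i, rfl⟩ := Int.eq_ofNat_of_zero_le (by lia : 0 ≤ i)
      exact hlarge i (by lia)
  obtain ⟨x, hx, L, g, h, hT, hlt, hL⟩ := hK.exists_distTriang ha (m := d + 1)
    (fun i _ => hg i) fun i hi => hK.isAlmostCofinite_cohomology (Nat.le_of_lt_succ hi)
      fun j _ => hg j
  refine finite_hyperExt_of_distTriang (fun y => ?_) hT
    (ihb _ (hb ▸ hlt) (hK.of_distTriang hT) (fun i => ?_) rfl)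
  · exact Module.mem_annihilator.1 (Ideal.annihilator_quotient.ge hx) y
  obtain hi | hi := le_or_gt i (d + 1)
  · exact hL i hi
  · have := hlarge i (by lia)
    have := hlarge (i - 1) (by lia)
    rw [Nat.cast_pred (by lia)] at this
    exact .cohomology_of_distTriang hT (sub_add_cancel _ 1)
      (.of_surjective _ (Submodule.mkQ_surjective _) .of_finite) .of_finite

end IsCofiniteUpTo
end Induction

/-! ### Comparison of the two definitions of `Ext` -/

section KerEq

variable {R : Type*} [Ring R] {M N P : Type*} [AddCommGroup M] [Module R M] [AddCommGroup N]
  [Module R N] [AddCommGroup P] [Module R P]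

/-- The linear map on the target of a surjective linear map `f` that is induced by a linear map
vanishing on the kernel of `f`. -/
noncomputable def liftOfKerLE (f : M →ₗ[R] N) (g : M →ₗ[R] P) (hf : Function.Surjective f)
    (h : LinearMap.ker f ≤ LinearMap.ker g) : N →ₗ[R] P :=
  (LinearMap.ker f).liftQ g h ∘ₗ (f.quotKerEquivOfSurjective hf).symm

theorem liftOfKerLE_apply (f : M →ₗ[R] N) (g : M →ₗ[R] P) (hf : Function.Surjective f)
    (h : LinearMap.ker f ≤ LinearMap.ker g) (x : M) : liftOfKerLE f g hf h (f x) = g x := by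
  have hx : (f.quotKerEquivOfSurjective hf).symm (f x) = Submodule.Quotient.mk x :=
    (LinearEquiv.symm_apply_eq _).2 rfl
  exact congrArg ((LinearMap.ker f).liftQ g h) hx

/-- Two surjective linear maps with the same kernel have isomorphic targets. -/
noncomputable def linearEquivOfKerEq (f : M →ₗ[R] N) (g : M →ₗ[R] P)
    (hf : Function.Surjective f) (hg : Function.Surjective g)
    (h : LinearMap.ker f = LinearMap.ker g) : N ≃ₗ[R] P :=
  .ofLinearMap (liftOfKerLE f g hf h.le) (liftOfKerLE g f hg h.ge)
    (LinearMap.ext <| hg.forall.2 fun x => by simp [liftOfKerLE_apply])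
    (LinearMap.ext <| hf.forall.2 fun x => by simp [liftOfKerLE_apply])

theorem linearEquivOfKerEq_apply (f : M →ₗ[R] N) (g : M →ₗ[R] P)
    (hf : Function.Surjective f) (hg : Function.Surjective g)
    (h : LinearMap.ker f = LinearMap.ker g) (x : M) :
    linearEquivOfKerEq f g hf hg h (f x) = g x :=
  liftOfKerLE_apply f g hf h.le x

end KerEq

section Opcycles

variable {R : Type*} [Ring R] {ι : Type*} {c : ComplexShape ι}
  (K : HomologicalComplex (ModuleCat R)ᵒᵖ c) (i j k : ι)

theorem pOpcycles_unop_injective : Function.Injective (K.pOpcycles i).unop.hom :=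
  (ModuleCat.mono_iff_injective _).1 inferInstance

theorem homologyι_unop_surjective : Function.Surjective (K.homologyι i).unop.hom :=
  (ModuleCat.epi_iff_surjective _).1 inferInstance

theorem exact_pOpcycles_unop_d_unop (h : c.prev j = i) :
    Function.Exact (K.pOpcycles j).unop.hom (K.d i j).unop.hom :=
  (ShortComplex.ShortExact.moduleCat_exact_iff_function_exact _).1
    (ShortComplex.exact_of_g_is_cokernel (.mk _ _ (K.d_pOpcycles i j))
      (K.opcyclesIsCokernel i j h)).unop

theorem exact_fromOpcycles_unop_homologyι_unop (h : c.next i = j) :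
    Function.Exact (K.fromOpcycles i j).unop.hom (K.homologyι i).unop.hom :=
  (ShortComplex.ShortExact.moduleCat_exact_iff_function_exact _).1
    (ShortComplex.exact_of_f_is_kernel (.mk _ _ (K.homologyι_comp_fromOpcycles i j))
      (K.homologyIsKernel i j h)).unop

theorem homologyι_unop_eq_zero_iff (h : c.next i = j) (z : (K.opcycles i).unop) :
    (K.homologyι i).unop.hom z = 0 ↔
      ∃ y, (K.d i j).unop.hom y = (K.pOpcycles i).unop.hom z := by
  rw [exact_fromOpcycles_unop_homologyι_unop K i j h z, ← K.p_fromOpcycles i j]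
  exact exists_congr fun y => (pOpcycles_unop_injective K i).eq_iff.symm

end Opcycles

section ExtMk

variable {C : Type*} [Category.{u} C] [Abelian C] [HasExt.{w} C] {X Y : C} {n : ℕ}

theorem projectiveResolution_extMk_smul {R : Type*} [CommRing R] [Linear R C]
    (P : ProjectiveResolution X) (r : R)
    (f : P.complex.X n ⟶ Y) (hf : P.complex.d (n + 1) n ≫ f = 0) :
    P.extMk (r • f) (n + 1) rfl (by rw [Linear.comp_smul, hf, smul_zero]) =
      r • P.extMk f (n + 1) rfl hf := by
  rw [Abelian.Ext.smul_eq_comp_mk₀, P.extMk_comp_mk₀]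
  simp only [Linear.comp_smul, Category.comp_id]

theorem projectiveResolution_extMk_eq_zero_iff (P : ProjectiveResolution X) {m : ℕ}
    (hm : (ComplexShape.down ℕ).next n = m) (f : P.complex.X n ⟶ Y)
    (hf : P.complex.d (n + 1) n ≫ f = 0) :
    P.extMk f (n + 1) rfl hf = 0 ↔ ∃ g : P.complex.X m ⟶ Y, P.complex.d n m ≫ g = f := by
  cases n with
  | succ n =>
    obtain rfl : n = m := by simpa only [ChainComplex.next_nat_succ] using hm
    exact P.extMk_eq_zero_iff f _ rfl hf n rfl
  | zero =>
    have hd : P.complex.d 0 m = 0 := P.complex.shape _ _ (by simp)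
    have hd' : P.cochainComplex.d (-((0 : ℕ) : ℤ)) 1 = 0 :=
      (P.cochainComplex.isZero_of_isStrictlyLE 0 1).eq_of_tgt _ _
    rw [← P.extEquivCohomologyClass.apply_eq_iff_eq,
      ProjectiveResolution.extEquivCohomologyClass_extMk,
      ProjectiveResolution.extEquivCohomologyClass_zero,
      CochainComplex.HomComplex.CohomologyClass.mk_eq_zero_iff,
      CochainComplex.HomComplex.Cocycle.toSingleMk_mem_coboundaries_iff _ _ _ _ _ 1 (by simp)]
    simp only [hd, hd', zero_comp, exists_const]
    rw [eq_comm, Preadditive.IsIso.comp_left_eq_zero, eq_comm]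

theorem injectiveResolution_extMk_smul {R : Type*} [CommRing R] [Linear R C]
    (I : InjectiveResolution Y) (r : R)
    (f : X ⟶ I.cocomplex.X n) (hf : f ≫ I.cocomplex.d n (n + 1) = 0) :
    I.extMk (r • f) (n + 1) rfl (by rw [Linear.smul_comp, hf, smul_zero]) =
      r • I.extMk f (n + 1) rfl hf := by
  rw [← (I.extMk f (n + 1) rfl hf).mk₀_id_comp, ← Abelian.Ext.smul_comp, ← Abelian.Ext.mk₀_smul,
    I.mk₀_comp_extMk]
  simp only [Linear.smul_comp, Category.id_comp]

end ExtMk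

section ExtComparison

variable {R : Type u} [CommRing R] {X X' Y : ModuleCat.{u} R}

/-- The modules `Hom(P_n, Y)` for a projective resolution `P` of `X`, as a complex in the opposite
category: `Ext R (ModuleCat R)` is defined by the homology of this complex. -/
noncomputable abbrev homComplex (P : ProjectiveResolution X) (Y : ModuleCat.{u} R) :
    ChainComplex (ModuleCat.{u} R)ᵒᵖ ℕ :=
  (((linearYoneda R (ModuleCat.{u} R)).obj Y).rightOp.mapHomologicalComplex _).obj P.complex

variable (P : ProjectiveResolution X) (n : ℕ)

/-- The module of `n`-cocycles of `Hom(P, Y)`. -/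
noncomputable abbrev homCocycles (Y : ModuleCat.{u} R) : ModuleCat.{u} R :=
  ((homComplex P Y).opcycles n).unop

/-- An `n`-cocycle of `Hom(P, Y)` as a morphism `P_n ⟶ Y`. -/
noncomputable def homCocyclesVal : homCocycles P n Y →ₗ[R] (P.complex.X n ⟶ Y) :=
  ((homComplex P Y).pOpcycles n).unop.hom

variable {P n} in
theorem d_comp_homCocyclesVal (z : homCocycles P n Y) :
    P.complex.d (n + 1) n ≫ homCocyclesVal P n z = 0 :=
  (exact_pOpcycles_unop_d_unop (homComplex P Y) (n + 1) n (by simp) _).2 ⟨z, rfl⟩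

/-- The homology of `homComplex P Y` computes the left derived functor behind
`Ext R (ModuleCat R)`. -/
noncomputable def leftDerivedIsoHomology (Y : ModuleCat.{u} R) :
    (((linearYoneda R (ModuleCat.{u} R)).obj Y).rightOp.leftDerived n).obj X ≅
      (homComplex P Y).homology n :=
  P.isoLeftDerivedObj _ n

variable {P} in
theorem leftDerived_map_comp_leftDerivedIsoHomology_hom (P' : ProjectiveResolution X')
    {g : X' ⟶ X} (φ : ProjectiveResolution.Hom P' P g) :
    (((linearYoneda R (ModuleCat.{u} R)).obj Y).rightOp.leftDerived n).map g ≫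
        (leftDerivedIsoHomology P n Y).hom =
      (leftDerivedIsoHomology P' n Y).hom ≫ HomologicalComplex.homologyMap
        ((((linearYoneda R (ModuleCat.{u} R)).obj Y).rightOp.mapHomologicalComplex _).map φ.hom)
        n :=
  ProjectiveResolution.isoLeftDerivedObj_hom_naturality g P' P φ.hom
    φ.hom_f_zero_comp_π_f_zero _ n

/-- The class of a cocycle in the left derived functor `Ext R (ModuleCat R)`. -/
noncomputable def homCocyclesToExt :
    homCocycles P n Y →ₗ[R] ((Ext R (ModuleCat.{u} R) n).obj (.op X)).obj Y :=
  ((leftDerivedIsoHomology P n Y).hom ≫ (homComplex P Y).homologyι n).unop.hom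

theorem homCocyclesToExt_surjective : Function.Surjective (homCocyclesToExt (Y := Y) P n) :=
  (leftDerivedIsoHomology P n Y).unop.toLinearEquiv.surjective.comp
    (homologyι_unop_surjective (homComplex P Y) n)

/-- The class of a cocycle in `Abelian.Ext`. -/
noncomputable def homCocyclesToAbelianExt :
    homCocycles P n Y →ₗ[R] Abelian.Ext.{u} X Y n where
  toFun z := P.extMk (homCocyclesVal P n z) (n + 1) rfl (d_comp_homCocyclesVal z)
  map_add' z z' := by
    rw [P.add_extMk]
    congr 1
    exact map_add _ _ _
  map_smul' r z := by
    rw [RingHom.id_apply, ← projectiveResolution_extMk_smul]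
    congr 1
    exact map_smul _ _ _

theorem homCocyclesToAbelianExt_surjective :
    Function.Surjective (homCocyclesToAbelianExt (Y := Y) P n) := by
  intro α
  obtain ⟨f, hf, rfl⟩ := P.extMk_surjective α (n + 1) rfl
  obtain ⟨z, rfl⟩ := (exact_pOpcycles_unop_d_unop (homComplex P Y) (n + 1) n (by simp) f).1 hf
  exact ⟨z, rfl⟩

theorem ker_homCocyclesToExt :
    LinearMap.ker (homCocyclesToExt (Y := Y) P n) =
      LinearMap.ker (homCocyclesToAbelianExt P n) := by
  ext z
  exact ((leftDerivedIsoHomology P n Y).unop.toLinearEquiv.map_eq_zero_iff.trans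
    (homologyι_unop_eq_zero_iff (homComplex P Y) n _ rfl z)).trans
    (projectiveResolution_extMk_eq_zero_iff P rfl _ (d_comp_homCocyclesVal z)).symm

variable {P n} in
theorem exists_homCocyclesToExt_eq (P' : ProjectiveResolution X') (g : X' ⟶ X)
    (φ : ProjectiveResolution.Hom P' P g) (z : homCocycles P n Y) :
    ∃ z' : homCocycles P' n Y, homCocyclesVal P' n z' = φ.hom.f n ≫ homCocyclesVal P n z ∧
      homCocyclesToExt P' n z' =
        (((Ext R (ModuleCat.{u} R) n).map g.op).app Y).hom (homCocyclesToExt P n z) := by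
  let F := ((linearYoneda R (ModuleCat.{u} R)).obj Y).rightOp
  let ψ : homComplex P' Y ⟶ homComplex P Y := (F.mapHomologicalComplex _).map φ.hom
  have hψ : (F.leftDerived n).map g ≫ (leftDerivedIsoHomology P n Y).hom ≫
      (homComplex P Y).homologyι n = ((leftDerivedIsoHomology P' n Y).hom ≫
        (homComplex P' Y).homologyι n) ≫ HomologicalComplex.opcyclesMap ψ n := by
    rw [← Category.assoc, leftDerived_map_comp_leftDerivedIsoHomology_hom n P' φ, Category.assoc,
      Category.assoc, ← HomologicalComplex.homologyι_naturality ψ n]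
  exact ⟨(HomologicalComplex.opcyclesMap ψ n).unop.hom z,
    congrArg (fun f => f.unop.hom z) (HomologicalComplex.p_opcyclesMap ψ n),
    congrArg (fun f => f.unop.hom z) hψ.symm⟩

/-- The comparison between `Ext` as a left derived functor in the first variable and
`Abelian.Ext`, computed with the chosen projective resolution of `X`. -/
noncomputable def extComparison (n : ℕ) (X Y : ModuleCat.{u} R) :
    ((Ext R (ModuleCat.{u} R) n).obj (.op X)).obj Y ≃ₗ[R] Abelian.Ext.{u} X Y n :=
  linearEquivOfKerEq _ _ (homCocyclesToExt_surjective (projectiveResolution X) n)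
    (homCocyclesToAbelianExt_surjective (projectiveResolution X) n) (ker_homCocyclesToExt _ n)

theorem extComparison_homCocyclesToExt (z : homCocycles (projectiveResolution X) n Y) :
    extComparison n X Y (homCocyclesToExt (projectiveResolution X) n z) =
      homCocyclesToAbelianExt (projectiveResolution X) n z :=
  linearEquivOfKerEq_apply _ _ _ _ _ z

theorem extComparison_map (g : X' ⟶ X) (x : ((Ext R (ModuleCat.{u} R) n).obj (.op X)).obj Y) :
    extComparison n X' Y ((((Ext R (ModuleCat.{u} R) n).map g.op).app Y).hom x) =
      (Abelian.Ext.mk₀ g).comp (extComparison n X Y x) (zero_add n) := by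
  obtain ⟨z, rfl⟩ := homCocyclesToExt_surjective (projectiveResolution X) n x
  let φ : ProjectiveResolution.Hom (projectiveResolution X') (projectiveResolution X) g :=
    ⟨ProjectiveResolution.lift g _ _, ProjectiveResolution.lift_commutes_zero g _ _⟩
  obtain ⟨z', hz', hmap⟩ := exists_homCocyclesToExt_eq (projectiveResolution X') g φ z
  rw [← hmap, extComparison_homCocyclesToExt, extComparison_homCocyclesToExt]
  refine .trans ?_ (ProjectiveResolution.mk₀_comp_extMk (homCocyclesVal _ n z) (n + 1) rfl
    (d_comp_homCocyclesVal z) φ).symm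
  simp only [homCocyclesToAbelianExt, LinearMap.coe_mk, AddHom.coe_mk, hz']

end ExtComparison

/-! ### Cofiniteness in bounded dimension -/

section Cofinite

variable {R : Type u} [CommRing R] {a : Ideal R} {X Y : ModuleCat.{u} R}

theorem finite_extQuot_iff {n : ℕ} : Module.Finite R (extQuot a n X) ↔
    Module.Finite R (Abelian.Ext.{u} (ModuleCat.of R (R ⧸ a)) X n) :=
  Module.Finite.equiv_iff (extComparison n (ModuleCat.of R (R ⧸ a)) X)

theorem IsCofinite.of_iso (h : IsCofinite a X) (e : X ≅ Y) : IsCofinite a Y := by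
  refine ⟨e.toLinearEquiv.support_eq.ge.trans h.1, fun i => ?_⟩
  have : Module.Finite R (((Ext R (ModuleCat.{u} R) i).obj (.op (.of R (R ⧸ a)))).obj X) := h.2 i
  exact .equiv (((Ext R (ModuleCat.{u} R) i).obj (.op (.of R (R ⧸ a)))).mapIso e).toLinearEquiv

theorem IsCofinite.finite_torsionBySet (h : IsCofinite a X) :
    Module.Finite R (Submodule.torsionBySet R X (a : Set R)) := by
  have := finite_extQuot_iff.1 (h.2 0)
  exact .equiv (extZeroQuotientEquiv a X)

section SingleFunctor

variable [HasDerivedCategory.{w} (ModuleCat.{u} R)]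

theorem subsingleton_cohomology_singleFunctor (X : ModuleCat.{u} R) {n : ℤ} (hn : n ≠ 0) :
    Subsingleton (cohomology ((singleFunctor (ModuleCat.{u} R) 0).obj X) n) := by
  refine ModuleCat.subsingleton_of_isZero ?_
  obtain hn | hn := hn.lt_or_gt
  · exact isZero_of_isGE _ 0 n hn
  · exact isZero_of_isLE _ 0 n hn

theorem support_cohomology_singleFunctor_subset (X : ModuleCat.{u} R) (n : ℤ) :
    Module.support R (cohomology ((singleFunctor (ModuleCat.{u} R) 0).obj X) n) ⊆
      Module.support R X := by
  obtain rfl | hn := eq_or_ne n 0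
  · exact ((singleFunctorCompHomologyFunctorIso _ 0).app X).toLinearEquiv.support_eq.le
  · have := subsingleton_cohomology_singleFunctor X hn
    simp only [Module.support_eq_empty, Set.empty_subset]

theorem isCofiniteUpTo_singleFunctor {d : ℕ} (hX : Module.support R X ⊆ PrimeSpectrum.zeroLocus a)
    (h : ∀ k ≤ d, Module.Finite R (extQuot a k X)) :
    IsCofiniteUpTo a d ((singleFunctor (ModuleCat.{u} R) 0).obj X) where
  isGE := inferInstance
  support_subset n := (support_cohomology_singleFunctor_subset X n).trans hX
  finite_hyperExt n hn := by
    obtain hn' | hn' := lt_or_ge n 0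
    · have := subsingleton_hyperExt (.of R (R ⧸ a)) ((singleFunctor _ 0).obj X) 0 hn'
      infer_instance
    · obtain ⟨k, rfl⟩ := Int.eq_ofNat_of_zero_le hn'
      exact (Module.Finite.equiv_iff (hyperExtSingle _ X 0 k (zero_add _))).2
        (finite_extQuot_iff.1 (h k (by lia)))

end SingleFunctor

theorem isCofinite_of_finite_extQuot [IsNoetherianRing R] {d : ℕ}
    (hd : PrimeSpectrum.zeroLocus a ⊆ primesOfDimLT R (d + 1))
    (hX : Module.support R X ⊆ PrimeSpectrum.zeroLocus a)
    (h : ∀ k ≤ d, Module.Finite R (extQuot a k X)) : IsCofinite a X := by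
  let _ := HasDerivedCategory.standard (ModuleCat.{u} R)
  refine ⟨hX, fun k => finite_extQuot_iff.2 ?_⟩
  have := (isCofiniteUpTo_singleFunctor hX h).finite_hyperExt_of_finiteOutside (fun i => ?_) k
  · exact .equiv (hyperExtSingle _ X 0 k (zero_add _))
  cases i with
  | zero =>
    exact ⟨⊥, Submodule.fg_bot, (Submodule.quotEquivOfEqBot ⊥ rfl).support_eq.le.trans
      (((support_cohomology_singleFunctor_subset X 0).trans hX).trans hd)⟩
  | succ i =>
    have := subsingleton_cohomology_singleFunctor X (n := (i + 1 : ℕ)) (by lia)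
    exact .of_finite

end Cofinite

section Parity

variable {R : Type u} [CommRing R] [IsNoetherianRing R] [HasDerivedCategory.{w} (ModuleCat.{u} R)]
  {a : Ideal R} {K : DerivedCategory (ModuleCat.{u} R)} {m : ℤ} [K.IsGE m]

theorem isCofinite_cohomology_of_succ (hd : PrimeSpectrum.zeroLocus a ⊆ primesOfDimLT R 3)
    (hE : ∀ n, Module.Finite R (hyperExt (ModuleCat.of R (R ⧸ a)) K n))
    (hK : Module.support R (cohomology K m) ⊆ PrimeSpectrum.zeroLocus a)
    (h : IsCofinite a (cohomology K (m + 1))) : IsCofinite a (cohomology K m) := by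
  obtain ⟨K', _, g, _, _, hT, -, hiso⟩ := exists_distTriang_singleFunctor_cohomology K m
  have hK' (n : ℤ) (hn : n ≤ m + 1) :
      Module.Finite R (hyperExt (ModuleCat.of R (R ⧸ a)) K' n) := by
    obtain rfl | hn := hn.eq_or_lt
    · have := hiso (m + 1) (lt_add_one m)
      have h' := h.of_iso (asIso ((homologyFunctor (ModuleCat.{u} R) (m + 1)).map g))
      exact (finite_hyperExt_iff_finite_torsionBySet_cohomology K' (m + 1)).2
        h'.finite_torsionBySet
    · have := subsingleton_hyperExt (ModuleCat.of R (R ⧸ a)) K' (m + 1) hn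
      infer_instance
  refine isCofinite_of_finite_extQuot hd hK fun k hk => finite_extQuot_iff.2 ?_
  have : Module.Finite R (hyperExt (ModuleCat.of R (R ⧸ a))
      ((singleFunctor (ModuleCat.{u} R) m).obj (cohomology K m)) (m + k)) :=
    finite_hyperExt_obj₁ hT (neg_add_eq_sub 1 _) (hK' _ (by lia)) (hE _)
  exact .equiv (hyperExtSingle _ (cohomology K m) m k rfl)

theorem exists_isGE_succ_of_isCofinite
    (hE : ∀ n, Module.Finite R (hyperExt (ModuleCat.of R (R ⧸ a)) K n))
    (h : IsCofinite a (cohomology K m)) :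
    ∃ (K' : DerivedCategory (ModuleCat.{u} R)) (g : K ⟶ K'), K'.IsGE (m + 1) ∧
      (∀ n, Module.Finite R (hyperExt (ModuleCat.of R (R ⧸ a)) K' n)) ∧
      (∀ i, Epi ((homologyFunctor (ModuleCat.{u} R) i).map g)) ∧
      ∀ i, m < i → IsIso ((homologyFunctor (ModuleCat.{u} R) i).map g) := by
  obtain ⟨K', _, g, _, hK', hT, hepi, hiso⟩ := exists_distTriang_singleFunctor_cohomology K m
  exact ⟨K', g, hK', fun n => finite_hyperExt_obj₃ hT rfl (hE n)
    (finite_hyperExt_singleFunctor (fun k => finite_extQuot_iff.1 (h.2 k)) m _), hepi, hiso⟩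

theorem isCofinite_cohomology_of_odd (hd : PrimeSpectrum.zeroLocus a ⊆ primesOfDimLT R 3)
    (hE : ∀ n, Module.Finite R (hyperExt (ModuleCat.of R (R ⧸ a)) K n))
    (hK : ∀ n, Module.support R (cohomology K n) ⊆ PrimeSpectrum.zeroLocus a)
    (hodd : ∀ i : ℕ, IsCofinite a (cohomology K (m + (2 * i + 1 : ℕ)))) (i : ℕ) :
    IsCofinite a (cohomology K (m + i)) := by
  induction i using Nat.twoStepInduction generalizing K m with
  | zero =>
    rw [Nat.cast_zero, add_zero]
    exact isCofinite_cohomology_of_succ hd hE (hK m) (hodd 0)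
  | one => exact hodd 0
  | more i ih _ =>
    have hm := isCofinite_cohomology_of_succ hd hE (hK m) (hodd 0)
    obtain ⟨K', g, _, hE', hepi, hiso⟩ := exists_isGE_succ_of_isCofinite hE hm
    have := hiso (m + 1) (lt_add_one m)
    obtain ⟨K'', g', hge, hE'', hepi', hiso'⟩ := exists_isGE_succ_of_isCofinite hE'
      ((hodd 0).of_iso (asIso ((homologyFunctor (ModuleCat.{u} R) (m + 1)).map g)))
    have e (j : ℕ) : cohomology K (m + (j + 2 : ℕ)) ≅ cohomology K'' (m + 1 + 1 + j) := by
      have := hiso (m + (j + 2 : ℕ)) (by lia)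
      have := hiso' (m + (j + 2 : ℕ)) (by lia)
      exact asIso ((homologyFunctor (ModuleCat.{u} R) (m + (j + 2 : ℕ))).map g) ≪≫
        asIso ((homologyFunctor (ModuleCat.{u} R) (m + (j + 2 : ℕ))).map g') ≪≫
        eqToIso (congrArg (cohomology K'') (by lia : (m + (j + 2 : ℕ) : ℤ) = m + 1 + 1 + j))
    refine (ih hE'' (fun n => ?_) fun j => ?_).of_iso (e i).symm
    · exact ((Module.support_subset_of_surjective _ ((ModuleCat.epi_iff_surjective _).1
        (hepi' n))).trans (Module.support_subset_of_surjective _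
          ((ModuleCat.epi_iff_surjective _).1 (hepi n)))).trans (hK n)
    · exact (hodd (j + 1)).of_iso (e (2 * j + 1))

end Parity

/-! ### Derived torsion and local cohomology -/

section PowTorsion

variable {R : Type*} [CommRing R] (a : Ideal R) {X Y : Type*} [AddCommGroup X] [Module R X]
  [AddCommGroup Y] [Module R Y]

variable (X) in
/-- The submodule `Γ_a(X)` of the elements annihilated by a power of `a`. -/
def powTorsion : Submodule R X :=
  ⨆ n : ℕ, Submodule.torsionBySet R X (a ^ n : Ideal R)

variable (X) in
theorem torsionBySet_pow_monotone :
    Monotone fun n : ℕ => Submodule.torsionBySet R X (a ^ n : Ideal R) :=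
  monotone_nat_of_le_succ fun n => Submodule.torsionBySet_le_torsionBySet_pow n (n + 1) n.le_succ a

variable {a}

theorem mem_powTorsion {x : X} :
    x ∈ powTorsion a X ↔ ∃ n : ℕ, x ∈ Submodule.torsionBySet R X (a ^ n : Ideal R) :=
  Submodule.mem_iSup_of_directed _ (torsionBySet_pow_monotone a X).directed_le

theorem torsionBySet_pow_le_powTorsion (n : ℕ) :
    Submodule.torsionBySet R X (a ^ n : Ideal R) ≤ powTorsion a X :=
  fun _ hx => mem_powTorsion.2 ⟨n, hx⟩

theorem map_mem_torsionBySet {s : Set R} (f : X →ₗ[R] Y) {x : X}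
    (hx : x ∈ Submodule.torsionBySet R X s) : f x ∈ Submodule.torsionBySet R Y s := by
  rw [Submodule.mem_torsionBySet_iff] at hx ⊢
  exact fun r => by rw [← map_smul, hx, map_zero]

theorem map_mem_powTorsion (f : X →ₗ[R] Y) {x : X} (hx : x ∈ powTorsion a X) :
    f x ∈ powTorsion a Y := by
  obtain ⟨n, hn⟩ := mem_powTorsion.1 hx
  exact mem_powTorsion.2 ⟨n, map_mem_torsionBySet f hn⟩

variable (a X) in
theorem powTorsion_powTorsion : powTorsion a (powTorsion a X) = ⊤ := by
  refine eq_top_iff.2 fun x _ => ?_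
  obtain ⟨n, hn⟩ := mem_powTorsion.1 x.2
  rw [Submodule.mem_torsionBySet_iff] at hn
  exact mem_powTorsion.2 ⟨n, (Submodule.mem_torsionBySet_iff _ _).2 fun r => Subtype.ext (hn r)⟩

theorem support_subset_zeroLocus_of_powTorsion_eq_top (h : powTorsion a X = ⊤) :
    Module.support R X ⊆ PrimeSpectrum.zeroLocus a := by
  refine support_subset_zeroLocus_of_pow fun x => ?_
  obtain ⟨n, hn⟩ := mem_powTorsion.1 (h ▸ Submodule.mem_top (x := x))
  exact ⟨n, fun r hr => (Submodule.mem_torsionBySet_iff _ _).1 hn ⟨r, hr⟩⟩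

theorem exists_le_torsionBySet_pow {N : Submodule R X} (hN : N.FG) (h : N ≤ powTorsion a X) :
    ∃ n : ℕ, N ≤ Submodule.torsionBySet R X (a ^ n : Ideal R) := by
  obtain ⟨_, ⟨n, rfl⟩, hn⟩ := (Submodule.fg_iff_compact N).1 hN _ _ (Set.range_nonempty _)
    (torsionBySet_pow_monotone a X).directed_le.directedOn_range isLUB_iSup h
  exact ⟨n, hn⟩

variable [IsNoetherianRing R]

theorem mem_powTorsion_of_smul_mem {x : X} (h : ∀ r ∈ a, r • x ∈ powTorsion a X) :
    x ∈ powTorsion a X := by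
  have hle : Submodule.map (LinearMap.toSpanSingleton R X x) a ≤ powTorsion a X :=
    Submodule.map_le_iff_le_comap.2 fun r hr => h r hr
  obtain ⟨n, hn⟩ := exists_le_torsionBySet_pow ((IsNoetherian.noetherian a).map _) hle
  refine mem_powTorsion.2 ⟨n + 1, ?_⟩
  have hpow : a ^ (n + 1) ≤ Ideal.torsionOf R X x := by
    rw [pow_succ, Ideal.mul_le]
    intro s hs r hr
    rw [Ideal.mem_torsionOf_iff, mul_smul]
    exact (Submodule.mem_torsionBySet_iff _ _).1 (hn ⟨r, hr, rfl⟩) ⟨s, hs⟩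
  exact (Submodule.mem_torsionBySet_iff _ _).2 fun r => hpow r.2

end PowTorsion

section Injective

variable {R : Type u} [CommRing R] [IsNoetherianRing R] {a : Ideal R} {X : Type u}
  [AddCommGroup X] [Module R X]

theorem exists_forall_mem_pow_map_eq_zero {I : Ideal R} (g : I →ₗ[R] powTorsion a X) :
    ∃ n : ℕ, ∀ x : I, (x : R) ∈ a ^ n → g x = 0 := by
  obtain ⟨m, hm⟩ := exists_le_torsionBySet_pow (Module.Finite.fg_top.map g)
    ((powTorsion_powTorsion a X).symm ▸ le_top)
  obtain ⟨k, hk⟩ := Ideal.exists_pow_inf_eq_pow_smul a (M := R) I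
  refine ⟨m + k, fun x hx => ?_⟩
  have hle : a ^ (m + k) • ⊤ ⊓ I ≤ (LinearMap.ker g).map I.subtype := by
    rw [hk _ (Nat.le_add_left k m), Nat.add_sub_cancel]
    refine (Submodule.smul_mono le_rfl inf_le_right).trans (Submodule.smul_le.2 fun r hr y hy => ?_)
    refine ⟨r • ⟨y, hy⟩, ?_, rfl⟩
    rw [SetLike.mem_coe, LinearMap.mem_ker, map_smul]
    exact (Submodule.mem_torsionBySet_iff _ _).1 (hm ⟨⟨y, hy⟩, trivial, rfl⟩) ⟨r, hr⟩
  obtain ⟨y, hy, hyx⟩ := hle ⟨by rwa [Ideal.smul_eq_mul, Ideal.mul_top], x.2⟩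
  rwa [← Subtype.ext hyx]

-- By Artin–Rees a linear map `I → Γ_a(X)` vanishes on `I ∩ a ^ n` for large `n`, so it factors
-- through the image of `I` in `R ⧸ a ^ n` and extends to `R ⧸ a ^ n → X`; the values of the
-- extension lie in `Γ_a(X)`.
instance injective_powTorsion [Module.Injective R X] : Module.Injective R (powTorsion a X) := by
  refine Module.Baer.injective fun I g => ?_
  obtain ⟨n, hn⟩ := exists_forall_mem_pow_map_eq_zero g
  let q : I →ₗ[R] R ⧸ a ^ n := (a ^ n).mkQ ∘ₗ I.subtype
  have hq : LinearMap.ker q ≤ LinearMap.ker g := fun x hx =>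
    hn x ((Submodule.Quotient.mk_eq_zero _).1 hx)
  obtain ⟨h, hh⟩ := Module.Injective.out ((LinearMap.ker q).liftQ q le_rfl)
    (LinearMap.ker_eq_bot.1 (Submodule.ker_liftQ_eq_bot _ _ _ le_rfl))
    ((powTorsion a X).subtype ∘ₗ (LinearMap.ker q).liftQ g hq)
  refine ⟨LinearMap.toSpanSingleton R _ ⟨h 1, torsionBySet_pow_le_powTorsion n
    (homQuotientEquiv (a ^ n) X h).2⟩, fun x hx => Subtype.ext ?_⟩
  have hx1 : x • (1 : R ⧸ a ^ n) = q ⟨x, hx⟩ :=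
    congrArg (Submodule.Quotient.mk (p := a ^ n)) (mul_one x)
  refine Eq.trans ?_ (hh (Submodule.Quotient.mk ⟨x, hx⟩))
  exact (map_smul h x 1).symm.trans (congrArg h hx1)

end Injective

section Functor

variable {R : Type u} [CommRing R] (a : Ideal R)

/-- The functor `Γ_a`. -/
def powTorsionFunctor : ModuleCat.{u} R ⥤ ModuleCat.{u} R where
  obj X := .of R (powTorsion a X)
  map f := ModuleCat.ofHom (f.hom.restrict fun _ => map_mem_powTorsion f.hom)

instance : (powTorsionFunctor a).Additive where

/-- The inclusion of `Γ_a` in the identity functor. -/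
def powTorsionFunctorι : powTorsionFunctor a ⟶ 𝟭 (ModuleCat.{u} R) where
  app X := ModuleCat.ofHom (powTorsion a X).subtype

instance (X : ModuleCat.{u} R) : Mono ((powTorsionFunctorι a).app X) :=
  (ModuleCat.mono_iff_injective _).2 Subtype.val_injective

instance [IsNoetherianRing R] (X : ModuleCat.{u} R) [Injective X] :
    Injective ((powTorsionFunctor a).obj X) := by
  have := Module.injective_module_of_injective_object R X
  exact Module.injective_object_of_injective_module R (powTorsion a X)

end Functor

section ShortExact

theorem injective_X₃_of_shortExact {C : Type*} [Category* C] [Abelian C] {S : ShortComplex C}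
    (hS : S.ShortExact) [Injective S.X₁] [Injective S.X₂] : Injective S.X₃ :=
  (Retract.mk hS.splittingOfInjective.s S.g hS.splittingOfInjective.s_g).injective

theorem torsionBySet_eq_bot_of_range_eq_powTorsion {R : Type u} [CommRing R] [IsNoetherianRing R]
    {a : Ideal R} {S : ShortComplex (ModuleCat.{u} R)} (hS : S.ShortExact)
    (h : LinearMap.range S.f.hom = powTorsion a S.X₂) :
    Submodule.torsionBySet R S.X₃ (a : Set R) = ⊥ := by
  refine (Submodule.eq_bot_iff _).2 fun y hy => ?_
  obtain ⟨x, rfl⟩ := (ModuleCat.epi_iff_surjective S.g).1 hS.epi_g y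
  have hker : ∀ z, z ∈ powTorsion a S.X₂ ↔ S.g.hom z = 0 := fun z => by
    rw [← h, ((ShortComplex.ShortExact.moduleCat_exact_iff_function_exact S).1 hS.exact) z]
    rfl
  refine (hker x).1 (mem_powTorsion_of_smul_mem fun r hr => (hker _).2 ?_)
  rw [map_smul]
  exact (Submodule.mem_torsionBySet_iff _ _).1 hy ⟨r, hr⟩

end ShortExact

section SectionComplex

variable {R : Type u} [CommRing R]

theorem subsingleton_hyperExt_of_isKInjective [HasDerivedCategory.{w} (ModuleCat.{u} R)]
    (A : ModuleCat.{u} R) (K : CochainComplex (ModuleCat.{u} R) ℤ) [K.IsKInjective] (n : ℤ)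
    (h : Subsingleton (A ⟶ K.X n)) : Subsingleton (hyperExt A (Q.obj K) n) := by
  refine ⟨fun f g => ?_⟩
  rw [← cancel_mono ((Q.commShiftIso n).inv.app K)]
  have hzero (φ : Q.obj ((CochainComplex.singleFunctor (ModuleCat.{u} R) 0).obj A) ⟶
      Q.obj (K⟦n⟧)) : φ = 0 := by
    obtain ⟨ψ, rfl⟩ := (CochainComplex.IsKInjective.Qh_map_bijective _ (K⟦n⟧)).surjective φ
    obtain ⟨ψ, rfl⟩ := (HomotopyCategory.quotient _ _).map_surjective ψ
    have h' : Subsingleton (A ⟶ K.X (0 + n)) := by rwa [zero_add]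
    have hψ : ψ = 0 := HomologicalComplex.from_single_hom_ext
      ((cancel_epi (HomologicalComplex.singleObjXSelf (.up ℤ) 0 A).inv).1 (h'.elim _ _))
    rw [hψ, Functor.map_zero]
    exact Functor.map_zero _ _ _
  exact (hzero _).trans (hzero _).symm

variable (a : Ideal R)

/-- The functor `Γ_a` on complexes. -/
abbrev powTorsionComplex :
    CochainComplex (ModuleCat.{u} R) ℤ ⥤ CochainComplex (ModuleCat.{u} R) ℤ :=
  (powTorsionFunctor a).mapHomologicalComplex _

variable (K : CochainComplex (ModuleCat.{u} R) ℤ)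

/-- The short exact sequence `0 → Γ_a(K) → K → K/Γ_a(K) → 0`. -/
noncomputable abbrev powTorsionShortComplex : ShortComplex (CochainComplex (ModuleCat.{u} R) ℤ) :=
  .mk ((NatTrans.mapHomologicalComplex (powTorsionFunctorι a) (.up ℤ)).app K)
    (cokernel.π _) (cokernel.condition _)

theorem powTorsionShortComplex_shortExact : (powTorsionShortComplex a K).ShortExact where
  exact := ShortComplex.exact_cokernel _
  mono_f := HomologicalComplex.mono_of_mono_f _ fun n =>
    inferInstanceAs (Mono ((powTorsionFunctorι a).app (K.X n)))
  epi_g := inferInstanceAs (Epi (cokernel.π _))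

variable [IsNoetherianRing R]

-- The quotient `K/Γ_a(K)` again consists of injective modules, and they have no `a`-torsion.
theorem subsingleton_hyperExt_powTorsionShortComplex_X₃ [HasDerivedCategory.{w} (ModuleCat.{u} R)]
    [∀ n, Injective (K.X n)] (d : ℤ) [K.IsStrictlyGE d] (n : ℤ) :
    Subsingleton (hyperExt (.of R (R ⧸ a)) (Q.obj (powTorsionShortComplex a K).X₃) n) := by
  let S (n : ℤ) := (powTorsionShortComplex a K).map
    (HomologicalComplex.eval (ModuleCat.{u} R) (.up ℤ) n)
  have hS (n : ℤ) : (S n).ShortExact :=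
    (HomologicalComplex.shortExact_iff_degreewise_shortExact _).1
      (powTorsionShortComplex_shortExact a K) n
  have (n : ℤ) : Injective ((powTorsionShortComplex a K).X₃.X n) := by
    have : Injective (S n).X₁ := inferInstanceAs (Injective ((powTorsionFunctor a).obj (K.X n)))
    have : Injective (S n).X₂ := inferInstanceAs (Injective (K.X n))
    exact injective_X₃_of_shortExact (hS n)
  have : (powTorsionShortComplex a K).X₃.IsStrictlyGE d := by
    rw [CochainComplex.isStrictlyGE_iff]
    intro i hi
    exact (K.isZero_of_isStrictlyGE d i hi).of_epi ((powTorsionShortComplex a K).g.f i)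
  have := CochainComplex.isKInjective_of_injective (powTorsionShortComplex a K).X₃ d
  have : Subsingleton
      (Submodule.torsionBySet R ((powTorsionShortComplex a K).X₃.X n) (a : Set R)) :=
    Submodule.subsingleton_iff_eq_bot.2
      (torsionBySet_eq_bot_of_range_eq_powTorsion (hS n) (Submodule.range_subtype _))
  exact subsingleton_hyperExt_of_isKInjective _ _ n
    (ModuleCat.homLinearEquiv (S := R) ≪≫ₗ homQuotientEquiv a _).injective.subsingleton

theorem finite_hyperExt_powTorsionComplex [HasDerivedCategory.{w} (ModuleCat.{u} R)]
    [∀ n, Injective (K.X n)] (d : ℤ) [K.IsStrictlyGE d] {n : ℤ}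
    (h : Module.Finite R (hyperExt (.of R (R ⧸ a)) (Q.obj K) n)) :
    Module.Finite R (hyperExt (.of R (R ⧸ a)) (Q.obj ((powTorsionComplex a).obj K)) n) := by
  have := subsingleton_hyperExt_powTorsionShortComplex_X₃ a K d (-1 + n)
  exact finite_hyperExt_obj₁ (triangleOfSES_distinguished (powTorsionShortComplex_shortExact a K))
    rfl (inferInstanceAs
      (Module.Finite R (hyperExt _ (Q.obj (powTorsionShortComplex a K).X₃) _))) h

end SectionComplex

section CycleClass

variable {R : Type*} [Ring R] {ι : Type*} {c : ComplexShape ι}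
  (K : HomologicalComplex (ModuleCat R) c) {i j k : ι}

/-- The homology class of a cycle, as a linear map on the kernel of the differential. -/
noncomputable def cycleClass (h : c.next j = k) :
    LinearMap.ker (K.d j k).hom →ₗ[R] K.homology j :=
  (K.liftCycles (ModuleCat.ofHom (LinearMap.ker (K.d j k).hom).subtype) k h
    (ModuleCat.hom_ext (LinearMap.ext fun x => x.2)) ≫ K.homologyπ j).hom

theorem cycleClass_surjective (h : c.next j = k) : Function.Surjective (cycleClass K h) := by
  have hπ : Function.Surjective (K.homologyπ j).hom :=
    (ModuleCat.epi_iff_surjective _).1 inferInstance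
  refine hπ.comp fun z => ⟨⟨(K.iCycles j).hom z, ?_⟩, ?_⟩
  · exact LinearMap.congr_fun (congrArg ModuleCat.Hom.hom (K.iCycles_d j k)) z
  · exact (ModuleCat.mono_iff_injective (K.iCycles j)).1 inferInstance
      (LinearMap.congr_fun (congrArg ModuleCat.Hom.hom (K.liftCycles_i _ k h _)) _)

theorem cycleClass_eq_zero_iff (h : c.next j = k) (hi : c.prev j = i)
    (x : LinearMap.ker (K.d j k).hom) :
    cycleClass K h x = 0 ↔ ∃ y, (K.d i j).hom y = x := by
  have hexact : Function.Exact (K.toCycles i j).hom (K.homologyπ j).hom :=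
    (ShortComplex.ShortExact.moduleCat_exact_iff_function_exact _).1
      (ShortComplex.exact_of_g_is_cokernel (.mk _ _ (K.toCycles_comp_homologyπ i j))
        (K.homologyIsCokernel i j hi))
  refine (hexact _).trans (exists_congr fun y => ?_)
  rw [← ((ModuleCat.mono_iff_injective (K.iCycles j)).1 inferInstance).eq_iff]
  have h₁ := congrArg (fun f => f.hom y) (K.toCycles_i i j)
  have h₂ := congrArg (fun f => f.hom x) (K.liftCycles_i (ModuleCat.ofHom
      (LinearMap.ker (K.d j k).hom).subtype) k h (ModuleCat.hom_ext (LinearMap.ext fun x => x.2)))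
  exact (Eq.congr h₁ h₂ : _ ↔ _)

end CycleClass

section Support

variable {R : Type u} [CommRing R]

theorem support_homology_subset {ι : Type*} {c : ComplexShape ι}
    (K : HomologicalComplex (ModuleCat.{u} R) c) (i : ι) :
    Module.support R (K.homology i) ⊆ Module.support R (K.X i) :=
  (Module.support_subset_of_surjective _ (cycleClass_surjective K rfl)).trans
    (Module.support_subset_of_injective _ (Submodule.injective_subtype _))

theorem support_homology_powTorsionComplex (a : Ideal R) (K : CochainComplex (ModuleCat.{u} R) ℤ)
    (n : ℤ) : Module.support R (((powTorsionComplex a).obj K).homology n) ⊆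
      PrimeSpectrum.zeroLocus a :=
  (support_homology_subset _ n).trans
    (support_subset_zeroLocus_of_powTorsion_eq_top (powTorsion_powTorsion a (K.X n)))

end Support

section CocycleExtClass

variable {R : Type*} [CommRing R] {C : Type*} [Category.{u} C] [Abelian C] [Linear R C]
  {Y : C} (I : InjectiveResolution Y) (n : ℕ) (X : C)

variable {n X} in
theorem comp_cochainComplexXIso_hom_comp_d {f : X ⟶ I.cochainComplex.X n}
    (hf : f ≫ I.cochainComplex.d n (n + 1 : ℕ) = 0) :
    (f ≫ (I.cochainComplexXIso n n rfl).hom) ≫ I.cocomplex.d n (n + 1) = 0 := by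
  rw [I.cochainComplex_d _ _ n (n + 1) rfl rfl, ← Category.assoc, ← Category.assoc,
    Preadditive.IsIso.comp_right_eq_zero] at hf
  exact hf

variable [HasExt.{w} C]

variable (R) in
/-- The class in `Ext X Y n` of a cocycle of degree `n` with values in an injective resolution. -/
noncomputable def cocycleExtClass :
    LinearMap.ker (Linear.rightComp R X (I.cochainComplex.d n (n + 1 : ℕ))) →ₗ[R]
      Abelian.Ext X Y n where
  toFun f := I.extMk (f ≫ (I.cochainComplexXIso n n rfl).hom) (n + 1) rfl
    (comp_cochainComplexXIso_hom_comp_d I f.2)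
  map_add' f g := by
    rw [I.add_extMk]
    congr 1
    exact Preadditive.add_comp _ _ _ _ _ _
  map_smul' r f := by
    rw [RingHom.id_apply, ← injectiveResolution_extMk_smul]
    congr 1
    exact Linear.smul_comp _ _ _ _ _ _

theorem cocycleExtClass_surjective : Function.Surjective (cocycleExtClass R I n X) := by
  intro α
  obtain ⟨f, hf, rfl⟩ := I.extMk_surjective α (n + 1) rfl
  refine ⟨⟨f ≫ (I.cochainComplexXIso n n rfl).inv, ?_⟩, ?_⟩
  · change (f ≫ _) ≫ _ = 0
    rw [I.cochainComplex_d _ _ n (n + 1) rfl rfl, Category.assoc, Iso.inv_hom_id_assoc,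
      ← Category.assoc, hf, zero_comp]
  · simp only [cocycleExtClass, LinearMap.coe_mk, AddHom.coe_mk, Category.assoc, Iso.inv_hom_id,
      Category.comp_id]

variable {I n X}

theorem cocycleExtClass_eq_zero_iff
    (f : LinearMap.ker (Linear.rightComp R X (I.cochainComplex.d n (n + 1 : ℕ)))) :
    cocycleExtClass R I n X f = 0 ↔
      ∃ g : X ⟶ I.cochainComplex.X (n - 1), g ≫ I.cochainComplex.d (n - 1) n = f := by
  simp only [cocycleExtClass, LinearMap.coe_mk, AddHom.coe_mk,
    ← I.extEquivCohomologyClass.apply_eq_iff_eq,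
    InjectiveResolution.extEquivCohomologyClass_extMk,
    InjectiveResolution.extEquivCohomologyClass_zero,
    CochainComplex.HomComplex.CohomologyClass.mk_eq_zero_iff, Category.assoc, Iso.hom_inv_id,
    Category.comp_id]
  exact CochainComplex.HomComplex.Cocycle.fromSingleMk_mem_coboundaries_iff _ _ _ _ _ _ (by simp)

theorem mk₀_comp_cocycleExtClass {X' : C} (g : X' ⟶ X)
    {f : LinearMap.ker (Linear.rightComp R X (I.cochainComplex.d n (n + 1 : ℕ)))}
    {f' : LinearMap.ker (Linear.rightComp R X' (I.cochainComplex.d n (n + 1 : ℕ)))}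
    (h : g ≫ f.1 = f'.1) :
    (Abelian.Ext.mk₀ g).comp (cocycleExtClass R I n X f) (zero_add n) =
      cocycleExtClass R I n X' f' := by
  refine (I.mk₀_comp_extMk _ (n + 1) rfl (comp_cochainComplexXIso_hom_comp_d I f.2) g).trans ?_
  simp only [cocycleExtClass, LinearMap.coe_mk, AddHom.coe_mk, ← h, Category.assoc]

end CocycleExtClass

section FilteredColimit

variable {R : Type u} [CommRing R] {J : Type} [SmallCategory J] [IsFiltered J]
  {F : J ⥤ ModuleCat.{u} R} {c : Cocone F}

theorem isIso_desc_of_isFiltered (hc : IsColimit c) (c' : Cocone F)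
    (hsurj : ∀ y : c'.pt, ∃ j x, (c'.ι.app j).hom x = y)
    (hinj : ∀ j x, (c'.ι.app j).hom x = 0 → ∃ (k : J) (f : j ⟶ k), (F.map f).hom x = 0) :
    IsIso (hc.desc c') := by
  have : PreservesFilteredColimitsOfSize.{0, 0} (forget (ModuleCat.{u} R)) :=
    preservesFilteredColimitsOfSize_shrink.{0, u, 0, u} _
  have : PreservesColimit F (forget (ModuleCat.{u} R)) :=
    (PreservesFilteredColimitsOfSize.preserves_filtered_colimits J).preservesColimit
  have hfac (j x) : (hc.desc c').hom ((c.ι.app j).hom x) = (c'.ι.app j).hom x :=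
    LinearMap.congr_fun (congrArg ModuleCat.Hom.hom (hc.fac c' j)) x
  have : Mono (hc.desc c') := by
    refine (ModuleCat.mono_iff_injective _).2 ((injective_iff_map_eq_zero _).2 fun y hy => ?_)
    obtain ⟨j, x, rfl⟩ := Concrete.isColimit_exists_rep F hc y
    obtain ⟨k, f, hf⟩ := hinj j x ((hfac j x).symm.trans hy)
    refine (LinearMap.congr_fun (congrArg ModuleCat.Hom.hom (c.w f)) x).symm.trans ?_
    exact (congrArg (c.ι.app k).hom hf).trans (map_zero _)
  have : Epi (hc.desc c') := by
    refine (ModuleCat.epi_iff_surjective _).2 fun y => ?_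
    obtain ⟨j, x, rfl⟩ := hsurj y
    exact ⟨_, hfac j x⟩
  exact isIso_of_mono_of_epi _

end FilteredColimit

section LocalCohomology

variable {R : Type u} [CommRing R]

theorem hom_quotient_ext {b : Ideal R} {X : ModuleCat.{u} R} {f g : ModuleCat.of R (R ⧸ b) ⟶ X}
    (h : f.hom 1 = g.hom 1) : f = g :=
  ModuleCat.hom_ext ((homQuotientEquiv b X).injective (Subtype.ext h))

theorem exists_hom_quotient_eq {b : Ideal R} {X : ModuleCat.{u} R} {x : X}
    (hx : x ∈ Submodule.torsionBySet R X (b : Set R)) :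
    ∃ f : ModuleCat.of R (R ⧸ b) ⟶ X, f.hom 1 = x := by
  obtain ⟨f, hf⟩ := (homQuotientEquiv b X).surjective ⟨x, hx⟩
  exact ⟨ModuleCat.ofHom f, congrArg Subtype.val hf⟩

variable (a : Ideal R) {M : ModuleCat.{u} R} (I : InjectiveResolution M) (n t : ℕ)

/-- A cocycle `f : R/a^t → I^n` as the cycle `f 1` of `Γ_a(I)`. -/
noncomputable def cocycleEvalOne :
    LinearMap.ker (Linear.rightComp R (ModuleCat.of R (R ⧸ a ^ t))
      (I.cochainComplex.d n (n + 1 : ℕ))) →ₗ[R]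
    LinearMap.ker (((powTorsionComplex a).obj I.cochainComplex).d n (n + 1 : ℕ)).hom where
  toFun f := ⟨⟨f.1.hom 1, torsionBySet_pow_le_powTorsion t (homQuotientEquiv _ _ f.1.hom).2⟩,
    Subtype.ext (LinearMap.congr_fun (congrArg ModuleCat.Hom.hom f.2) 1)⟩
  map_add' _ _ := rfl
  map_smul' _ _ := rfl

/-- The class in the homology of `Γ_a(I)` of a cocycle `R/a^t → I^n`. -/
noncomputable def cocycleHomologyClass :
    LinearMap.ker (Linear.rightComp R (ModuleCat.of R (R ⧸ a ^ t))
      (I.cochainComplex.d n (n + 1 : ℕ))) →ₗ[R]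
    ((powTorsionComplex a).obj I.cochainComplex).homology n :=
  cycleClass ((powTorsionComplex a).obj I.cochainComplex) (by simp) ∘ₗ cocycleEvalOne a I n t

theorem cocycleHomologyClass_eq_zero_iff
    (f : LinearMap.ker (Linear.rightComp R (ModuleCat.of R (R ⧸ a ^ t))
      (I.cochainComplex.d n (n + 1 : ℕ)))) :
    cocycleHomologyClass a I n t f = 0 ↔
      ∃ y ∈ powTorsion a (I.cochainComplex.X (n - 1)),
        (I.cochainComplex.d (n - 1) n).hom y = f.1.hom 1 := by
  refine (cycleClass_eq_zero_iff _ _ (CochainComplex.prev ℤ n) _).trans ?_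
  exact ⟨fun ⟨y, hy⟩ => ⟨y.1, y.2, congrArg Subtype.val hy⟩,
    fun ⟨y, hy, h⟩ => ⟨⟨y, hy⟩, Subtype.ext h⟩⟩

theorem ker_cocycleExtClass_le :
    LinearMap.ker (cocycleExtClass R I n (.of R (R ⧸ a ^ t))) ≤
      LinearMap.ker (cocycleHomologyClass a I n t) := by
  intro f hf
  obtain ⟨g, hg⟩ := (cocycleExtClass_eq_zero_iff f).1 hf
  refine (cocycleHomologyClass_eq_zero_iff a I n t f).2
    ⟨g.hom 1, torsionBySet_pow_le_powTorsion t (homQuotientEquiv _ _ g.hom).2, ?_⟩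
  rw [← hg]
  rfl

/-- The natural map `Ext^n(R/a^t, M) → H^n(Γ_a(I))`. -/
noncomputable def extToHomology :
    Abelian.Ext.{u} (ModuleCat.of R (R ⧸ a ^ t)) M n →ₗ[R]
      ((powTorsionComplex a).obj I.cochainComplex).homology n :=
  liftOfKerLE _ _ (cocycleExtClass_surjective I n _) (ker_cocycleExtClass_le a I n t)

theorem extToHomology_cocycleExtClass
    (f : LinearMap.ker (Linear.rightComp R (ModuleCat.of R (R ⧸ a ^ t))
      (I.cochainComplex.d n (n + 1 : ℕ)))) :
    extToHomology a I n t (cocycleExtClass R I n _ f) = cocycleHomologyClass a I n t f :=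
  liftOfKerLE_apply _ _ _ _ f

variable {t} {s : ℕ}

theorem extToHomology_comp (g : ModuleCat.of R (R ⧸ a ^ s) ⟶ ModuleCat.of R (R ⧸ a ^ t))
    (hg : g.hom 1 = 1) (x : Abelian.Ext.{u} (ModuleCat.of R (R ⧸ a ^ t)) M n) :
    extToHomology a I n s ((Abelian.Ext.mk₀ g).comp x (zero_add n)) = extToHomology a I n t x := by
  obtain ⟨f, rfl⟩ := cocycleExtClass_surjective (R := R) I n _ x
  have hf : (g ≫ f.1) ≫ I.cochainComplex.d n (n + 1 : ℕ) = 0 := by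
    rw [Category.assoc, show f.1 ≫ _ = 0 from f.2, comp_zero]
  rw [mk₀_comp_cocycleExtClass g (f' := ⟨g ≫ f.1, hf⟩) rfl, extToHomology_cocycleExtClass,
    extToHomology_cocycleExtClass]
  refine congrArg (cycleClass _ _) (Subtype.ext (Subtype.ext ?_))
  exact congrArg f.1.hom hg

theorem exists_extToHomology_eq (y : ((powTorsionComplex a).obj I.cochainComplex).homology n) :
    ∃ t x, extToHomology a I n t x = y := by
  obtain ⟨z, rfl⟩ := cycleClass_surjective ((powTorsionComplex a).obj I.cochainComplex)
    (k := (n + 1 : ℕ)) (by simp) y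
  obtain ⟨t, ht⟩ := mem_powTorsion.1 z.1.2
  obtain ⟨f, hf⟩ := exists_hom_quotient_eq ht
  have hd : f ≫ I.cochainComplex.d n (n + 1 : ℕ) = 0 := hom_quotient_ext <|
    (congrArg (I.cochainComplex.d n (n + 1 : ℕ)).hom hf).trans (congrArg Subtype.val z.2)
  refine ⟨t, cocycleExtClass R I n _ ⟨f, hd⟩, ?_⟩
  rw [extToHomology_cocycleExtClass]
  exact congrArg (cycleClass _ _) (Subtype.ext (Subtype.ext hf))

theorem exists_comp_eq_zero_of_extToHomology_eq_zero
    (x : Abelian.Ext.{u} (ModuleCat.of R (R ⧸ a ^ t)) M n) (hx : extToHomology a I n t x = 0) :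
    ∃ s₀, ∀ s ≥ s₀, ∀ g : ModuleCat.of R (R ⧸ a ^ s) ⟶ ModuleCat.of R (R ⧸ a ^ t),
      g.hom 1 = 1 → (Abelian.Ext.mk₀ g).comp x (zero_add n) = 0 := by
  obtain ⟨f, rfl⟩ := cocycleExtClass_surjective (R := R) I n _ x
  rw [extToHomology_cocycleExtClass, cocycleHomologyClass_eq_zero_iff] at hx
  obtain ⟨y, hy, hyf⟩ := hx
  obtain ⟨s₀, hs₀⟩ := mem_powTorsion.1 hy
  refine ⟨s₀, fun s hs g hg => ?_⟩
  obtain ⟨h, hh⟩ := exists_hom_quotient_eq (torsionBySet_pow_monotone a _ hs hs₀)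
  have hgf : h ≫ I.cochainComplex.d (n - 1) n = g ≫ f.1 := hom_quotient_ext <|
    ((congrArg (I.cochainComplex.d (n - 1) n).hom hh).trans hyf).trans
      (congrArg f.1.hom hg).symm
  have hf : (g ≫ f.1) ≫ I.cochainComplex.d n (n + 1 : ℕ) = 0 := by
    rw [Category.assoc, show f.1 ≫ _ = 0 from f.2, comp_zero]
  rw [mk₀_comp_cocycleExtClass g (f' := ⟨g ≫ f.1, hf⟩) rfl]
  exact (cocycleExtClass_eq_zero_iff _).2 ⟨h, hgf⟩

/-- The cocone on `Ext^n(R/a^t, M)` with tip `H^n(Γ_a(I))`. -/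
noncomputable def extToHomologyCocone :
    Cocone (localCohomology.diagram (localCohomology.idealPowersDiagram a) n ⋙
      (evaluation (ModuleCat.{u} R) (ModuleCat.{u} R)).obj M) where
  pt := ((powTorsionComplex a).obj I.cochainComplex).homology n
  ι :=
    { app := fun t => ModuleCat.ofHom (extToHomology a I n t.unop.unop ∘ₗ
        (extComparison n (.of R (R ⧸ a ^ t.unop.unop)) M).toLinearMap)
      naturality := fun _ s f =>
        let D := localCohomology.ringModIdeals (localCohomology.idealPowersDiagram a)
        ModuleCat.hom_ext <| LinearMap.ext fun x =>
        (congrArg (extToHomology a I n s.unop.unop)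
          (extComparison_map n (D.map f.unop) x)).trans
          (extToHomology_comp a I n (D.map f.unop) rfl _) }

theorem isIso_desc_extToHomologyCocone
    {c : Cocone (localCohomology.diagram (localCohomology.idealPowersDiagram a) n ⋙
      (evaluation (ModuleCat.{u} R) (ModuleCat.{u} R)).obj M)} (hc : IsColimit c) :
    IsIso (hc.desc (extToHomologyCocone a I n)) := by
  refine isIso_desc_of_isFiltered hc _ (fun y => ?_) fun t x hx => ?_
  · obtain ⟨t, x, hx⟩ := exists_extToHomology_eq a I n y
    obtain ⟨x, rfl⟩ := (extComparison n _ M).surjective x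
    exact ⟨.op (.op t), x, hx⟩
  · obtain ⟨s, hs⟩ := exists_comp_eq_zero_of_extToHomology_eq_zero a I n _ hx
    refine ⟨.op (.op (max s t.unop.unop)), (homOfLE (le_max_right s _)).op.op,
      (extComparison n _ M).map_eq_zero_iff.1 ?_⟩
    exact (extComparison_map n _ x).trans (hs _ (le_max_left s _) _ rfl)

/-- `H^n_a(M)` is the `n`-th cohomology of `Γ_a(I)` for an injective resolution `I` of `M`. -/
noncomputable def localCohomologyIso :
    (localCohomology a n).obj M ≅ ((powTorsionComplex a).obj I.cochainComplex).homology n :=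
  have : HasColimit (localCohomology.diagram (localCohomology.idealPowersDiagram a) n) :=
    localCohomology.hasColimitDiagram _ n
  have := isIso_desc_extToHomologyCocone a I n (isColimitOfPreserves _ (colimit.isColimit _))
  (asIso ((isColimitOfPreserves _ (colimit.isColimit _)).desc (extToHomologyCocone a I n)) :)

end LocalCohomology

section Conclusion

theorem zeroLocus_subset_primesOfDimLT {R : Type*} [CommRing R] {a : Ideal R} {d : ℕ}
    (h : ringKrullDim (R ⧸ a) ≤ d) : PrimeSpectrum.zeroLocus a ⊆ primesOfDimLT R (d + 1) := by
  intro p hp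
  let f (q : Set.Ici p) : PrimeSpectrum.zeroLocus (a : Set R) := ⟨q, Set.Subset.trans hp q.2⟩
  have hle : (Order.coheight p : WithBot ℕ∞) ≤ d := by
    rw [Order.coheight_eq_krullDim_Ici]
    exact (Order.krullDim_le_of_strictMono f fun _ _ h => h).trans (ringKrullDim_quotient a ▸ h)
  exact ENat.lt_add_one_iff (ENat.natCast_ne_top d) |>.2 (WithBot.coe_le_coe.1 hle)

variable {R : Type u} [CommRing R] (a : Ideal R) {M : ModuleCat.{u} R} (I : InjectiveResolution M)
  [HasDerivedCategory.{w} (ModuleCat.{u} R)]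

/-- The complex `RΓ_a(M)`, computed by an injective resolution `I` of `M`. -/
noncomputable abbrev derivedTorsion : DerivedCategory (ModuleCat.{u} R) :=
  Q.obj ((powTorsionComplex a).obj I.cochainComplex)

instance isGE_derivedTorsion : (derivedTorsion a I).IsGE 0 := by
  have : ((powTorsionComplex a).obj I.cochainComplex).IsStrictlyGE 0 :=
    HomologicalComplex.map_isStrictlySupported _ _ _
  infer_instance

/-- `H^n_a(M)` is the `n`-th cohomology of `RΓ_a(M)`. -/
noncomputable def cohomologyDerivedTorsionIso (n : ℕ) :
    cohomology (derivedTorsion a I) n ≅ (localCohomology a n).obj M :=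
  (homologyFunctorFactors _ n).app _ ≪≫ (localCohomologyIso a I n).symm

theorem support_cohomology_derivedTorsion_subset (n : ℤ) :
    Module.support R (cohomology (derivedTorsion a I) n) ⊆ PrimeSpectrum.zeroLocus a :=
  ((homologyFunctorFactors _ n).app _).toLinearEquiv.support_eq.le.trans
    (support_homology_powTorsionComplex a _ n)

theorem finite_hyperExt_derivedTorsion [IsNoetherianRing R]
    (hM : ∀ i, Module.Finite R (Abelian.Ext.{u} (.of R (R ⧸ a)) M i)) (n : ℤ) :
    Module.Finite R (hyperExt (.of R (R ⧸ a)) (derivedTorsion a I) n) := by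
  have e : (singleFunctor (ModuleCat.{u} R) 0).obj M ≅ Q.obj I.cochainComplex :=
    (singleFunctorIsoCompQ _ 0).app M ≪≫ asIso (Q.map I.ι')
  have := finite_hyperExt_singleFunctor hM 0 n
  exact finite_hyperExt_powTorsionComplex a _ 0 (.equiv (hyperExtCongr _ e n))

end Conclusion

theorem stmt4_general {R : Type u} [CommRing R] [IsNoetherianRing R] (a : Ideal R)
    (hdim : ringKrullDim (R ⧸ a) ≤ 2) (M : ModuleCat.{u} R)
    (hM : ∀ i, Module.Finite R (extQuot a i M))
    (hodd : ∀ i : ℕ, IsCofinite a ((localCohomology a (2 * i + 1)).obj M)) (i : ℕ) :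
    IsCofinite a ((localCohomology a i).obj M) := by
  let _ := HasDerivedCategory.standard (ModuleCat.{u} R)
  let I := InjectiveResolution.of M
  have e (n : ℕ) : cohomology (derivedTorsion a I) (0 + n) ≅ (localCohomology a n).obj M :=
    eqToIso (by rw [zero_add]) ≪≫ cohomologyDerivedTorsionIso a I n
  exact (isCofinite_cohomology_of_odd (zeroLocus_subset_primesOfDimLT hdim)
    (finite_hyperExt_derivedTorsion a I fun i => finite_extQuot_iff.1 (hM i))
    (support_cohomology_derivedTorsion_subset a I)
    (fun i => (hodd i).of_iso (e (2 * i + 1)).symm) i).of_iso (e i)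

theorem stmt4 {R : Type u} [CommRing R] [IsNoetherianRing R] (a : Ideal R) (ha : a ≠ ⊤)
    (hdim : ringKrullDim (R ⧸ a) = 2) (M : ModuleCat.{u} R) (hfg : Module.Finite R M)
    (hodd : ∀ i : ℕ, IsCofinite a ((localCohomology a (2 * i + 1)).obj M)) :
    ∀ i : ℕ, IsCofinite a ((localCohomology a i).obj M) :=
  stmt4_general a hdim.le M (fun _ => finite_extQuot_iff.2 inferInstance) hodd
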